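/- Let (R, 𝔪, k) be a regular local ring of dimension 3. Let (m, n, r) be a tuple of positive integers with r = m − 3(n−2) ≥ 2, n ≥ 4, and m ≥ 2n+1 ≥ 9. Then there exists an ideal J ⊆ R with pd_R(R/J) = 3 such that R/J has Tor-algebra class G(r) and realizes the tuple (m, n, r): the minimal free resolution 0 → F_3 → F_2 → F_1 → R of R/J has rank_R(F_1) = m and rank_R(F_3) = n. -/

import Mathlib

open IsLocalRing

/-- `R/J` has projective dimension 3, Tor-algebra class `G(r)` (normal form
`f̄₁ⁱ f̄₂ⁱ = f̄₃¹` for `1 ≤ i ≤ r`, all other products of basis elements zero)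
and realizes the tuple `(m, n, r)`: its minimal free resolution
`0 → F₃ → F₂ → F₁ → R` has `rank F₁ = m` and `rank F₃ = n`. -/
def HasTorClassGWithRanks (R : Type) [CommRing R] [IsLocalRing R]
    (J : Ideal R) (m n r : ℕ) : Prop :=
  ∃ (n2 : ℕ) (h3 : 0 < n), r ≤ m ∧ r ≤ n2 ∧
  ∃ (d1 : (Fin m → R) →ₗ[R] R) (d2 : (Fin n2 → R) →ₗ[R] (Fin m → R))
    (d3 : (Fin n → R) →ₗ[R] (Fin n2 → R))
    (m11 : (Fin m → R) →ₗ[R] (Fin m → R) →ₗ[R] (Fin n2 → R))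
    (m12 : (Fin m → R) →ₗ[R] (Fin n2 → R) →ₗ[R] (Fin n → R)),
    -- minimal free resolution of `R/J`
    LinearMap.range d1 = J ∧
    LinearMap.ker d1 = LinearMap.range d2 ∧
    LinearMap.ker d2 = LinearMap.range d3 ∧
    LinearMap.ker d3 = ⊥ ∧
    (∀ v, d1 v ∈ maximalIdeal R) ∧
    (∀ v, d2 v ∈ maximalIdeal R • (⊤ : Submodule R (Fin m → R))) ∧
    (∀ v, d3 v ∈ maximalIdeal R • (⊤ : Submodule R (Fin n2 → R))) ∧
    -- DG-algebra axioms
    (∀ a b, d2 (m11 a b) = d1 a • b - d1 b • a) ∧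
    (∀ a, m11 a a = 0) ∧ (∀ a b, m11 a b = - m11 b a) ∧
    (∀ a z, d3 (m12 a z) = d1 a • z - m11 a (d2 z)) ∧
    (∀ a b c, m12 c (m11 a b) = m12 a (m11 b c)) ∧
    -- `G(r)` normal form for the induced products on `F ⊗ k`
    (∀ a b : Fin m, m11 (Pi.single a 1) (Pi.single b 1) ∈
      maximalIdeal R • (⊤ : Submodule R (Fin n2 → R))) ∧
    (∀ (a : Fin m) (b : Fin n2),
      m12 (Pi.single a 1) (Pi.single b 1) -
        (if (a : ℕ) = (b : ℕ) ∧ (a : ℕ) < r then Pi.single (⟨0, h3⟩ : Fin n) 1 else 0) ∈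
      maximalIdeal R • (⊤ : Submodule R (Fin n → R)))

/-! ### Part 1 : the recursive Gorenstein data -/

/-- Contraction of a function on `ℤ` with the banded skew matrix. -/
def GS {R : Type} [CommRing R] (A B C : ℤ → R) (f : ℤ → R) (l : ℤ) : R :=
  A l * f (-l - 1) + C l * f (-l) + B l * f (1 - l)

/-- The next vector of Pfaffians. -/
def GphiNext {R : Type} [CommRing R] (a b c : R) (n : ℤ) (f0 f1 : ℤ → R) (i : ℤ) : R :=
  c * f1 i - a * b * f0 i + a * ((if i = n + 1 then 1 else 0) * f1 n)
    + b * ((if i = -(n + 1) then 1 else 0) * f1 (-n))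

/-- The next alternating form of sub-Pfaffians. -/
def GtauNext {R : Type} [CommRing R] (a b c : R) (n : ℤ) (f1 : ℤ → R)
    (t0 t1 : ℤ → ℤ → ℤ → R) (i j l : ℤ) : R :=
  c * t1 i j l - a * b * t0 i j l
    + a * ((if i = n + 1 then 1 else 0) * t1 j l n + (if j = n + 1 then 1 else 0) * t1 l i n
        + (if l = n + 1 then 1 else 0) * t1 i j n)
    + b * ((if i = -(n + 1) then 1 else 0) * t1 j l (-n)
        + (if j = -(n + 1) then 1 else 0) * t1 l i (-n)
        + (if l = -(n + 1) then 1 else 0) * t1 i j (-n))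
    + f1 i * ((if j = n + 1 then 1 else 0) * (if l = -(n + 1) then 1 else 0)
        - (if j = -(n + 1) then 1 else 0) * (if l = n + 1 then 1 else 0))
    + f1 j * ((if l = n + 1 then 1 else 0) * (if i = -(n + 1) then 1 else 0)
        - (if l = -(n + 1) then 1 else 0) * (if i = n + 1 then 1 else 0))
    + f1 l * ((if i = n + 1 then 1 else 0) * (if j = -(n + 1) then 1 else 0)
        - (if i = -(n + 1) then 1 else 0) * (if j = n + 1 then 1 else 0))

/-- The invariants of the recursion. -/
structure GGood {R : Type} [CommRing R] (A B C : ℤ → R) (n : ℤ) (f0 f1 : ℤ → R)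
    (t0 t1 : ℤ → ℤ → ℤ → R) : Prop where
  nn : 0 ≤ n
  sf0 : ∀ i, n ≤ |i| → f0 i = 0
  sf1 : ∀ i, n < |i| → f1 i = 0
  st0 : ∀ i j k, n ≤ |i| → t0 i j k = 0
  st1 : ∀ i j k, n < |i| → t1 i j k = 0
  cy0 : ∀ i j k, t0 i j k = t0 j k i
  cy1 : ∀ i j k, t1 i j k = t1 j k i
  an0 : ∀ i j k, t0 i j k = - t0 j i k
  an1 : ∀ i j k, t1 i j k = - t1 j i k
  al0 : ∀ i k, t0 i i k = 0
  al1 : ∀ i k, t1 i i k = 0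
  top : ∀ j, t1 j n (-n) = f0 j
  qf : ∀ l, |l| ≤ n → GS A B C f0 l =
    (if l = n then 1 else 0) * f1 (-n) - (if l = -n then 1 else 0) * f1 n
  qt : ∀ i j l, |l| ≤ n → GS A B C (t0 i j) l =
    f0 j * (if i = l then 1 else 0) - f0 i * (if j = l then 1 else 0)
      + (if l = n then 1 else 0) * t1 i j (-n) - (if l = -n then 1 else 0) * t1 i j n
  ff : ∀ l, |l| ≤ n → GS A B C f1 l = 0
  tt : ∀ i j l, |l| ≤ n → GS A B C (t1 i j) l =
    f1 j * (if i = l then 1 else 0) - f1 i * (if j = l then 1 else 0)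

theorem GGood.step {R : Type} [CommRing R] {A B C : ℤ → R} {n : ℤ} {f0 f1 : ℤ → R}
    {t0 t1 : ℤ → ℤ → ℤ → R} (hA : ∀ l, A (-1 - l) = - A l) (hB : ∀ l, B (1 - l) = - B l)
    (hC : ∀ l, C (-l) = - C l) (h : GGood A B C n f0 f1 t0 t1) :
    GGood A B C (n + 1) f1 (GphiNext (A n) (B (n + 1)) (- C (n + 1)) n f0 f1) t1
      (GtauNext (A n) (B (n + 1)) (- C (n + 1)) n f1 t0 t1) := by
  obtain ⟨nn, sf0, sf1, st0, st1, cy0, cy1, an0, an1, al0, al1, top, qf, qt, ff, tt⟩ := h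
  have st1b : ∀ i j k, n < |j| → t1 i j k = 0 := fun i j k hj => by
    rw [cy1]; exact st1 _ _ _ hj
  have st1c : ∀ i j k, n < |k| → t1 i j k = 0 := fun i j k hj => by
    rw [cy1]; exact st1b _ _ _ hj
  have st0c : ∀ i j k, n ≤ |k| → t0 i j k = 0 := fun i j k hj => by
    rw [cy0, cy0]; exact st0 _ _ _ hj
  have st0b : ∀ i j k, n ≤ |j| → t0 i j k = 0 := fun i j k hj => by
    rw [cy0]; exact st0 _ _ _ hj
  have al1b : ∀ i k, t1 i k k = 0 := fun i k => by rw [cy1]; exact al1 _ _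
  have al1c : ∀ i k, t1 i k i = 0 := fun i k => by rw [cy1, cy1]; exact al1 _ _
  have ap : |n + 1| = n + 1 := abs_of_nonneg (by omega)
  have aq : |-(n + 1)| = n + 1 := by rw [abs_neg, ap]
  have apn : |n| = n := abs_of_nonneg nn
  have aqn : |-n| = n := by rw [abs_neg, apn]
  have hp1 : f1 (n + 1) = 0 := sf1 _ (by omega)
  have hq1 : f1 (-(n + 1)) = 0 := sf1 _ (by omega)
  have hne : ((n + 1 : ℤ) = -(n + 1)) = False := by simp; omega
  have hne' : (-(n + 1 : ℤ) = (n + 1)) = False := by simp; omega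
  have tp : ∀ i j, GtauNext (A n) (B (n + 1)) (- C (n + 1)) n f1 t0 t1 i j (n + 1) =
      A n * t1 i j n + f1 j * (if i = -(n+1) then 1 else 0) - f1 i * (if j = -(n+1) then 1 else 0) := by
    intro i j
    simp only [GtauNext, hne, if_true, if_false, hp1]
    rw [st1c i j (n+1) (by omega), st0c i j (n+1) (by omega), st1b j (n+1) _ (by omega),
      st1b j (n+1) _ (by omega), st1 (n+1) _ _ (by omega), st1 (n+1) _ _ (by omega)]
    ring
  have tq : ∀ i j, GtauNext (A n) (B (n + 1)) (- C (n + 1)) n f1 t0 t1 i j (-(n + 1)) =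
      B (n+1) * t1 i j (-n) + f1 i * (if j = (n+1) then 1 else 0) - f1 j * (if i = (n+1) then 1 else 0) := by
    intro i j
    simp only [GtauNext, hne', if_true, if_false, hq1]
    rw [st1c i j (-(n+1)) (by omega), st0c i j (-(n+1)) (by omega), st1b j (-(n+1)) _ (by omega),
      st1b j (-(n+1)) _ (by omega), st1 (-(n+1)) _ _ (by omega), st1 (-(n+1)) _ _ (by omega)]
    ring
  have Sp : ∀ l, |l| ≤ n → GS A B C (fun m => if m = n + 1 then 1 else 0) l
      = - B (n+1) * (if l = -n then 1 else 0) := by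
    intro l hl
    rw [abs_le] at hl
    have e := hB (n + 1)
    simp only [GS]
    rw [if_neg (by omega), if_neg (by omega)]
    by_cases h : l = -n
    · subst h; rw [if_pos (by omega), if_pos rfl, show (-n : ℤ) = 1 - (n+1) by ring, e]; ring
    · rw [if_neg (by omega), if_neg h]; ring
  have Sq : ∀ l, |l| ≤ n → GS A B C (fun m => if m = -(n + 1) then 1 else 0) l
      = A n * (if l = n then 1 else 0) := by
    intro l hl
    rw [abs_le] at hl
    simp only [GS]
    by_cases h : l = n
    · subst h
      rw [if_pos (by omega), if_neg (by omega), if_neg (by omega), if_pos rfl]; ring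
    · rw [if_neg (by omega), if_neg (by omega), if_neg (by omega), if_neg h]; ring
  have Slast : ∀ f : ℤ → R, (∀ i, n < |i| → f i = 0) → GS A B C f (n + 1) = B (n+1) * f (-n) := by
    intro f hf
    simp only [GS]
    rw [hf (-(n+1) - 1) (by rw [show (-(n+1) - 1 : ℤ) = -(n+2) by ring, abs_neg]; rw [abs_of_nonneg] <;> omega),
      hf (-(n+1)) (by omega), show (1 - (n+1) : ℤ) = -n by ring]
    ring
  have Sfirst : ∀ f : ℤ → R, (∀ i, n < |i| → f i = 0) → GS A B C f (-(n + 1)) = - A n * f n := by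
    intro f hf
    simp only [GS]
    rw [hf (1 - -(n+1)) (by rw [abs_of_nonneg] <;> omega),
      hf (-(-(n+1))) (by rw [abs_neg]; omega), show (-(-(n+1)) - 1 : ℤ) = n by ring,
      show (-(n+1) : ℤ) = -1 - n by ring, hA]
    ring
  have Slast2 : ∀ f : ℤ → R, (∀ i, n + 1 < |i| → f i = 0) →
      GS A B C f (n + 1) = C (n+1) * f (-(n+1)) + B (n+1) * f (-n) := by
    intro f hf
    simp only [GS]
    rw [hf (-(n+1) - 1) (by rw [show (-(n+1) - 1 : ℤ) = -(n+2) by ring, abs_neg]; rw [abs_of_nonneg] <;> omega),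
      show (1 - (n+1) : ℤ) = -n by ring]
    ring
  have Sfirst2 : ∀ f : ℤ → R, (∀ i, n + 1 < |i| → f i = 0) →
      GS A B C f (-(n + 1)) = - C (n+1) * f (n+1) - A n * f n := by
    intro f hf
    simp only [GS]
    rw [hf (1 - -(n+1)) (by rw [abs_of_nonneg] <;> omega), hC, neg_neg,
      show ((n+1) - 1 : ℤ) = n by ring,
      show (-(n+1) : ℤ) = -1 - n by ring, hA]
    ring
  have hsf2 : ∀ i, n + 1 < |i| → GphiNext (A n) (B (n + 1)) (- C (n + 1)) n f0 f1 i = 0 := by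
    intro i hi
    simp only [GphiNext]
    rw [sf1 i (by omega), sf0 i (by omega), if_neg, if_neg]
    · ring
    · rintro rfl; omega
    · rintro rfl; omega
  have hcy2 : ∀ i j k, GtauNext (A n) (B (n + 1)) (- C (n + 1)) n f1 t0 t1 i j k =
      GtauNext (A n) (B (n + 1)) (- C (n + 1)) n f1 t0 t1 j k i := by
    intro i j k
    simp only [GtauNext]
    rw [cy1 i j k, cy0 i j k]; ring
  have hst2 : ∀ i j k, n + 1 < |i| →
      GtauNext (A n) (B (n + 1)) (- C (n + 1)) n f1 t0 t1 i j k = 0 := by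
    intro i j k hi
    have h1 : (i = n + 1) = False := by simp; rintro rfl; omega
    have h2 : (i = -(n + 1)) = False := by simp only [eq_iff_iff, iff_false]; rintro rfl; omega
    simp only [GtauNext, h1, h2, if_false]
    rw [st1 i j k (by omega), st0 i j k (by omega), sf1 i (by omega), st1b k i _ (by omega),
      st1 i _ _ (by omega), st1b k i _ (by omega), st1 i _ _ (by omega)]
    ring
  have hst2c : ∀ i j k, n + 1 < |k| →
      GtauNext (A n) (B (n + 1)) (- C (n + 1)) n f1 t0 t1 i j k = 0 := by
    intro i j k hk
    rw [hcy2, hcy2]; exact hst2 _ _ _ hk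
  refine ⟨by omega, fun i hi => sf1 i (by omega), hsf2, fun i j k hi => st1 i j k (by omega), hst2,
    cy1, hcy2, an1, ?_, al1, ?_, ?_, ?_, ?_, ?_, ?_⟩
  · intro i j k
    simp only [GtauNext]
    rw [an1 i j k, an0 i j k, an1 j k n, an1 i k n, an1 j i n, an1 j k (-n), an1 i k (-n),
      an1 j i (-n)]
    ring
  · intro i k
    simp only [GtauNext]
    rw [al1 i k, al0 i k, an1 k i n, an1 k i (-n), al1 i n, al1 i (-n)]
    ring
  · intro j
    rw [tq, if_pos rfl, st1b _ _ _ (by omega), hp1]; ring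
  · intro l hl
    rw [abs_le] at hl
    by_cases h1 : l = n + 1
    · subst h1
      rw [Slast f1 sf1, if_pos rfl, if_neg (show ¬ (n + 1 = -(n+1)) by omega)]
      simp only [GphiNext, hne', if_false, if_true, hq1]
      rw [sf0 (-(n+1)) (by omega)]; ring
    by_cases h2 : l = -(n + 1)
    · subst h2
      rw [Sfirst f1 sf1, if_pos rfl, if_neg (show ¬ (-(n + 1) = n+1) by omega)]
      simp only [GphiNext, hne, if_false, if_true, hp1]
      rw [sf0 (n+1) (by omega)]; ring
    rw [ff l (by rw [abs_le]; omega), if_neg h1, if_neg h2]; ring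
  · intro i j l hl
    rw [abs_le] at hl
    by_cases h1 : l = n + 1
    · subst h1
      rw [Slast _ (fun k hk => st1c i j k hk), if_pos rfl, if_neg (show ¬ (n + 1 = -(n+1)) by omega), tq]; ring
    by_cases h2 : l = -(n + 1)
    · subst h2
      rw [Sfirst _ (fun k hk => st1c i j k hk), if_pos rfl, if_neg (show ¬ (-(n + 1) = n+1) by omega), tp]; ring
    rw [tt i j l (by rw [abs_le]; omega), if_neg h1, if_neg h2]; ring
  · intro l hl
    rw [abs_le] at hl
    by_cases h1 : l = n + 1
    · subst h1
      rw [Slast2 _ hsf2]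
      simp only [GphiNext, hne', if_false, if_true, hq1]
      rw [sf0 (-(n+1)) (by omega), sf0 (-n) (by omega), if_neg (by omega), if_neg (by omega)]; ring
    by_cases h2 : l = -(n + 1)
    · subst h2
      rw [Sfirst2 _ hsf2]
      simp only [GphiNext, hne, if_false, if_true, hp1]
      rw [sf0 ((n+1)) (by omega), sf0 (n) (by omega), if_neg (by omega), if_neg (by omega)]; ring
    have hl' : |l| ≤ n := by rw [abs_le]; omega
    have e1 := ff l hl'
    have e2 := qf l hl'
    have e3 := Sp l hl'
    have e4 := Sq l hl'
    simp only [GS] at e1 e2 e3 e4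
    simp only [GS, GphiNext]
    linear_combination (-C (n+1)) * e1 - A n * B (n+1) * e2 + A n * f1 n * e3
      + B (n+1) * f1 (-n) * e4
  · intro i j l hl
    rw [abs_le] at hl
    by_cases h1 : l = n + 1
    · subst h1
      rw [Slast2 _ (fun k hk => hst2c i j k hk), tq]
      simp only [GtauNext, GphiNext]
      rw [st0c i j (-n) (by omega), if_neg (show ¬ (-n = n + 1) by omega),
        if_neg (show ¬ (-n = -(n + 1)) by omega), al1b, an1 (-n) i (-n), al1b]
      have e1 := top j
      have e2 := top i
      rw [← e1, ← e2, cy1 j n (-n), cy1 i n (-n), an1 j (-n) n, an1 (-n) i n,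
         cy1 n (-n) j, cy1 n (-n) i]
      have e3 : t1 i (-n) n = - t1 (-n) i n := an1 _ _ _
      rw [e3]; ring
    by_cases h2 : l = -(n + 1)
    · subst h2
      rw [Sfirst2 _ (fun k hk => hst2c i j k hk), tp]
      simp only [GtauNext, GphiNext]
      rw [st0c i j (n) (by omega), if_neg (show ¬ (n = n + 1) by omega),
        if_neg (show ¬ (n = -(n + 1)) by omega), al1b, an1 (n) i (n), al1b]
      have e1 := top j
      have e2 := top i
      rw [← e1, ← e2, an1 i n (-n)]
      ring
    have hl' : |l| ≤ n := by rw [abs_le]; omega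
    have e1 := tt i j l hl'
    have e2 := qt i j l hl'
    have e3 := Sp l hl'
    have e4 := Sq l hl'
    have e5 := ff l hl'
    have e6 := tt n j l hl'
    have e7 := tt i n l hl'
    have e8 := tt (-n) j l hl'
    have e9 := tt i (-n) l hl'
    simp only [GS] at e1 e2 e3 e4 e5 e6 e7 e8 e9
    simp only [GS, GtauNext, GphiNext]
    simp only [cy1 j _ n, cy1 j _ (-n), cy1 _ n j, cy1 _ (-n) j, cy1 _ i n, cy1 _ i (-n)]
    simp only [eq_comm (a := n) (b := l), eq_comm (a := -n) (b := l)] at e6 e7 e8 e9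
    linear_combination (-C (n+1)) * e1 - A n * B (n+1) * e2 + A n * t1 i j n * e3
      + B (n+1) * t1 i j (-n) * e4
      + ((if i = n + 1 then 1 else 0) * (if j = -(n + 1) then 1 else 0)
        - (if i = -(n + 1) then 1 else 0) * (if j = n + 1 then 1 else 0)) * e5
      + A n * (if i = n + 1 then 1 else 0) * e6 + A n * (if j = n + 1 then 1 else 0) * e7
      + B (n+1) * (if i = -(n + 1) then 1 else 0) * e8
      + B (n+1) * (if j = -(n + 1) then 1 else 0) * e9
      + f1 i * (if j = n + 1 then 1 else 0) * e4 - f1 i * (if j = -(n + 1) then 1 else 0) * e3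
      + f1 j * (if i = -(n + 1) then 1 else 0) * e3 - f1 j * (if i = n + 1 then 1 else 0) * e4

theorem Gor_exists {R : Type} [CommRing R] {A B C : ℤ → R}
    (hA : ∀ l, A (-1 - l) = - A l) (hB : ∀ l, B (1 - l) = - B l)
    (hC : ∀ l, C (-l) = - C l) (I : Ideal R) (x y z : R)
    (mA : ∀ l, A l ∈ I) (mB : ∀ l, B l ∈ I) (mC : ∀ l, C l ∈ I)
    (hAx : ∀ l, A l ∣ x ^ 2) (hxA : ∀ l, x ∣ A l) (hBy : ∀ l, B l ∣ y ^ 2)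
    (hC0 : C 0 = 0) (hCz : ∀ k : ℕ, C (k + 1) = - z ^ 2) (n : ℕ) :
    ∃ f0 f1 t0 t1, GGood A B C n f0 f1 t0 t1 ∧ (∀ i, f0 i ∈ I ^ (n - 1)) ∧ (∀ i, f1 i ∈ I ^ n) ∧
      (∀ i j k, t0 i j k ∈ I ^ (n - 2)) ∧ (∀ i j k, t1 i j k ∈ I ^ (n - 1)) ∧
      f1 n ∣ x ^ (2 * n) ∧ f1 (-n) ∣ y ^ (2 * n) ∧ x ∣ f1 0 - z ^ (2 * n) := by
  induction n with
  | zero =>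
    refine ⟨0, fun i => if i = 0 then 1 else 0, 0, 0, ?_, ?_, ?_, ?_, ?_, ?_, ?_, ?_⟩
    · refine ⟨by simp, by simp, ?_, by simp, by simp, by simp, by simp, by simp, by simp, by simp,
        by simp, by simp, ?_, ?_, ?_, ?_⟩
      · intro i hi; rw [if_neg]; rintro rfl; simp at hi
      · intro l hl
        simp [GS]
      · intro i j l hl
        simp [GS]
      · intro l hl
        have : l = 0 := by simpa using hl
        subst this
        simp [GS, hC0]
      · intro i j l hl
        have : l = 0 := by simpa using hl
        subst this
        by_cases hi : i = 0 <;> by_cases hj : j = 0 <;> simp [GS, hi, hj]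
    all_goals simp
  | succ n ih =>
    obtain ⟨f0, f1, t0, t1, g, h0, h1, k0, k1, hx, hy, hz⟩ := ih
    have g2 := g.step hA hB hC
    refine ⟨_, _, _, _, by push_cast; exact g2, ?_, ?_, ?_, ?_, ?_, ?_, ?_⟩
    · simpa using h1
    · intro i
      have e1 : -C (n+1) * f1 i ∈ I ^ (n+1) := by
        rw [pow_succ']; exact Ideal.mul_mem_mul (neg_mem (mC _)) (h1 i)
      have e2 : ∀ j, A n * f1 j ∈ I ^ (n+1) := fun j => by
        rw [pow_succ']; exact Ideal.mul_mem_mul (mA _) (h1 j)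
      have e3 : ∀ j, B (n+1) * f1 j ∈ I ^ (n+1) := fun j => by
        rw [pow_succ']; exact Ideal.mul_mem_mul (mB _) (h1 j)
      have e4 : ∀ j, A n * B (n+1) * f0 j ∈ I ^ (n+1) := fun j => by
        have : A n * B (n+1) * f0 j ∈ I ^ (1 + 1 + (n - 1)) := by
          rw [pow_add, pow_add, pow_one]
          exact Ideal.mul_mem_mul (Ideal.mul_mem_mul (mA _) (mB _)) (h0 j)
        exact Ideal.pow_le_pow_right (by omega) this
      have e5 : ∀ (p : R) j, A n * (p * f1 j) ∈ I ^ (n+1) := fun p j => by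
        rw [mul_left_comm]; exact Ideal.mul_mem_left _ _ (e2 j)
      have e6 : ∀ (p : R) j, B (n+1) * (p * f1 j) ∈ I ^ (n+1) := fun p j => by
        rw [mul_left_comm]; exact Ideal.mul_mem_left _ _ (e3 j)
      exact add_mem (add_mem (sub_mem e1 (e4 i)) (e5 _ _)) (e6 _ _)
    · intro i j k
      exact Ideal.pow_le_pow_right (by omega) (k1 i j k)
    · intro i j l
      have hle : I ^ (1 + (n - 1)) ≤ I ^ (n + 1 - 1) := Ideal.pow_le_pow_right (by omega)
      have e1 : ∀ i j l, -C (n+1) * t1 i j l ∈ I ^ (n + 1 - 1) := fun i j l => by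
        apply hle; rw [pow_add, pow_one]; exact Ideal.mul_mem_mul (neg_mem (mC _)) (k1 i j l)
      have e2 : ∀ (p : R) i j l, A n * (p * t1 i j l) ∈ I ^ (n + 1 - 1) := fun p i j l => by
        rw [mul_left_comm]; apply Ideal.mul_mem_left
        apply hle; rw [pow_add, pow_one]; exact Ideal.mul_mem_mul ((mA _)) (k1 i j l)
      have e3 : ∀ (p : R) i j l, B (n+1) * (p * t1 i j l) ∈ I ^ (n + 1 - 1) := fun p i j l => by
        rw [mul_left_comm]; apply Ideal.mul_mem_left
        apply hle; rw [pow_add, pow_one]; exact Ideal.mul_mem_mul ((mB _)) (k1 i j l)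
      have e4 : ∀ i j l, A n * B (n+1) * t0 i j l ∈ I ^ (n+1-1) := fun i j l => by
        have : A n * B (n+1) * t0 i j l ∈ I ^ (1 + 1 + (n - 2)) := by
          rw [pow_add, pow_add, pow_one]
          exact Ideal.mul_mem_mul (Ideal.mul_mem_mul (mA _) (mB _)) (k0 i j l)
        exact Ideal.pow_le_pow_right (by omega) this
      have e5 : ∀ (p : R) j, f1 j * p ∈ I ^ (n + 1 - 1) := fun p j => by
        apply Ideal.mul_mem_right; simpa using h1 j
      have e6 := fun i j l => add_mem (e1 i j l) (e4 i j l)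
      simp only [GtauNext, mul_add]
      exact add_mem (add_mem (add_mem (add_mem (add_mem (sub_mem (e1 _ _ _) (e4 _ _ _))
        (add_mem (add_mem (e2 _ _ _ _) (e2 _ _ _ _)) (e2 _ _ _ _)))
        (add_mem (add_mem (e3 _ _ _ _) (e3 _ _ _ _)) (e3 _ _ _ _))) (e5 _ _)) (e5 _ _)) (e5 _ _)
    · have : GphiNext (A n) (B (n + 1)) (-C (n + 1)) n f0 f1 (n + 1) = A n * f1 n := by
        simp only [GphiNext, if_true]
        rw [g.sf1 (n+1) (by rw [abs_of_nonneg] <;> omega), g.sf0 (n+1) (by rw [abs_of_nonneg] <;> omega),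
          if_neg (by omega)]; ring
      push_cast
      rw [this, show 2 * (n+1) = 2 + 2 * n by ring, pow_add]
      exact mul_dvd_mul (hAx _) hx
    · have : GphiNext (A n) (B (n + 1)) (-C (n + 1)) n f0 f1 (-(n + 1)) = B (n+1) * f1 (-n) := by
        simp only [GphiNext, if_true]
        rw [g.sf1 (-(n+1)) (by rw [abs_neg, abs_of_nonneg] <;> omega), g.sf0 (-(n+1)) (by rw [abs_neg, abs_of_nonneg] <;> omega),
          if_neg (by omega)]; ring
      push_cast
      rw [this, show 2 * (n+1) = 2 + 2 * n by ring, pow_add]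
      exact mul_dvd_mul (hBy _) hy
    · have : GphiNext (A n) (B (n + 1)) (-C (n + 1)) n f0 f1 0 - z ^ (2 * (n+1)) =
          z ^ 2 * (f1 0 - z ^ (2*n)) - A n * (B (n+1) * f0 0) := by
        simp only [GphiNext]
        rw [if_neg (by omega), if_neg (by omega), hCz]; ring
      rw [this]
      exact dvd_sub (dvd_mul_of_dvd_right hz _) (dvd_mul_of_dvd_left (hxA _) _)

/-! ### Part 2 : Koszul facts -/

structure KFacts {R : Type} [CommRing R] (x : Fin 3 → R) : Prop where
  k3 : ∀ r, x 0 * r = 0 → r = 0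
  k2 : ∀ v : Fin 3 → R, x 0 * v 1 = x 1 * v 0 → x 0 * v 2 = x 2 * v 0 → ∃ r, ∀ s, v s = r * x s
  k1 : ∀ v : Fin 3 → R, x 0 * v 0 + x 1 * v 1 + x 2 * v 2 = 0 → ∃ w : Fin 3 → R,
    v 0 = x 1 * w 2 - x 2 * w 1 ∧ v 1 = x 2 * w 0 - x 0 * w 2 ∧ v 2 = x 0 * w 1 - x 1 * w 0

theorem kfacts_of_regular {R : Type} [CommRing R] (x : Fin 3 → R)
    (hreg : RingTheory.Sequence.IsRegular R [x 0, x 1, x 2]) : KFacts x := by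
  have h := hreg.toIsWeaklyRegular
  have h0 : ∀ r, x 0 * r = 0 → r = 0 := by
    intro r hr
    rw [RingTheory.Sequence.isWeaklyRegular_cons_iff] at h
    exact h.1.right_eq_zero_of_smul hr
  have h1 : ∀ r a, x 1 * r = x 0 * a → ∃ b, r = x 0 * b := by
    intro r a hr
    have := h.regular_mod_prev 1 (by simp)
    rw [isSMulRegular_iff_right_eq_zero_of_smul] at this
    have h2 := this (Submodule.Quotient.mk r) (by
      rw [← Submodule.Quotient.mk_smul, Submodule.Quotient.mk_eq_zero]
      simp [Ideal.ofList_cons]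
      simp [Ideal.mem_span_singleton, hr])
    rw [Submodule.Quotient.mk_eq_zero] at h2
    simp [Ideal.ofList_cons] at h2
    simpa [Ideal.mem_span_singleton, Dvd.dvd] using h2
  have h2 : ∀ r a b, x 2 * r = x 0 * a + x 1 * b → ∃ c d, r = x 0 * c + x 1 * d := by
    intro r a b hr
    have := h.regular_mod_prev 2 (by simp)
    rw [isSMulRegular_iff_right_eq_zero_of_smul] at this
    have h2 := this (Submodule.Quotient.mk r) (by
      rw [← Submodule.Quotient.mk_smul, Submodule.Quotient.mk_eq_zero]
      simp [Ideal.ofList_cons]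
      rw [← Ideal.span_union, Set.singleton_union, Ideal.mem_span_pair]
      exact ⟨a, b, by rw [hr]; ring⟩)
    rw [Submodule.Quotient.mk_eq_zero] at h2
    simp [Ideal.ofList_cons] at h2
    rw [← Ideal.span_union, Set.singleton_union, Ideal.mem_span_pair] at h2
    obtain ⟨c, d, h⟩ := h2
    exact ⟨c, d, by rw [← h]; ring⟩
  have c0 : ∀ a b, x 0 * a = x 0 * b → a = b := fun a b hab => by
    have := h0 (a - b) (by rw [mul_sub, hab, sub_self])
    exact sub_eq_zero.mp this
  refine ⟨h0, ?_, ?_⟩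
  · intro v e1 e2
    obtain ⟨r, hr⟩ := h1 (v 0) (v 1) e1.symm
    refine ⟨r, fun s => ?_⟩
    fin_cases s
    · simp [hr, mul_comm]
    · apply c0; simp only [Fin.mk_one]; rw [e1, hr]; ring
    · apply c0; simp only [Fin.reduceFinMk]; rw [e2, hr]; ring
  · intro v hv
    obtain ⟨p, q, hpq⟩ := h2 (v 2) (- v 0) (- v 1) (by linear_combination hv)
    obtain ⟨t, ht⟩ := h1 (v 1 + x 2 * q) (- (v 0 + x 2 * p)) (by rw [hpq] at hv; linear_combination hv)
    refine ⟨![-q, p, -t], ?_, ?_, ?_⟩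
    · simp
      apply c0
      rw [hpq] at hv
      linear_combination hv - x 1 * ht
    · simp; linear_combination ht
    · simp; linear_combination hpq

/-! ### Part 3 : exactness of the Gorenstein complex -/

structure FD {R : Type} [CommRing R] (I : Ideal R) (ι : Type) [Fintype ι] where
  φ : ι → R
  Ph : (ι → R) →ₗ[R] (ι → R)
  V : (ι → R) →ₗ[R] (ι → R) →ₗ[R] (ι → R)
  PhV : ∀ a b, Ph (V a b) = (φ ⬝ᵥ a) • b - (φ ⬝ᵥ b) • a
  VPh : ∀ a z, V a (Ph z) = (φ ⬝ᵥ a) • z - (a ⬝ᵥ z) • φ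
  Vaa : ∀ a, V a a = 0
  φm : ∀ i, φ i ∈ I ^ 2
  Vm : ∀ a b i, V a b i ∈ I ^ 2
  phPh : ∀ z, φ ⬝ᵥ Ph z = 0
  Phph : Ph φ = 0
  ex1 : ∀ b, φ ⬝ᵥ b = 0 → ∃ v, Ph v = b
  ex2 : ∀ z, Ph z = 0 → ∃ s : R, z = s • φ
  inj : ∀ s : R, s • φ = 0 → s = 0

theorem ann_descent {R : Type} [CommRing R] {M : Type} [AddCommGroup M] [Module R M]
    (x : Fin 3 → R) (I : Ideal R) (hx : ∀ s, x s ∈ I) (Z Q : Submodule R M)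
    (hQ : ∀ b ∈ Z, (∀ s, x s • b ∈ Q) → b ∈ Q) (N : ℕ) :
    ∀ b ∈ Z, (∀ c ∈ I ^ N, c • b ∈ Q) → b ∈ Q := by
  induction N with
  | zero => intro b _ h; simpa using h 1 (by simp)
  | succ N ih =>
    intro b hb h
    refine hQ b hb fun s => ih _ (Z.smul_mem _ hb) fun c hc => ?_
    rw [smul_smul]
    exact h _ (by rw [pow_succ]; exact Ideal.mul_mem_mul hc (hx s))

noncomputable def FD.mk' {R : Type} [CommRing R] (x : Fin 3 → R) (kf : KFacts x) (I : Ideal R)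
    (hI : Ideal.span {x 0, x 1, x 2} = I) (ι : Type) [Fintype ι] [DecidableEq ι]
    (φ : ι → R) (Φ : ι → ι → R) (τ : ι → ι → ι → R)
    (skew : ∀ i j, Φ i j = - Φ j i) (cy : ∀ i j k, τ i j k = τ j k i)
    (an : ∀ i j k, τ i j k = - τ j i k) (al : ∀ i k, τ i i k = 0)
    (ff : ∀ l, ∑ m, φ m * Φ m l = 0)
    (tt : ∀ i j l, ∑ m, τ i j m * Φ m l
      = φ j * (if i = l then 1 else 0) - φ i * (if j = l then 1 else 0))
    (φm : ∀ i, φ i ∈ I ^ 2) (τm : ∀ i j k, τ i j k ∈ I ^ 2)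
    (rad : ∀ s, x s ∈ (Ideal.span (Set.range φ)).radical) (i0 : ι) (p : ℕ)
    (hp : φ i0 ∣ x 0 ^ p) : {D : FD I ι // D.φ = φ ∧ ∀ z l, D.Ph z l = ∑ m, Φ l m * z m} := by
  let Ph : (ι → R) →ₗ[R] (ι → R) := Matrix.mulVecLin (Matrix.of Φ)
  have hPh : ∀ z l, Ph z l = ∑ m, Φ l m * z m := fun z l => rfl
  let V : (ι → R) →ₗ[R] (ι → R) →ₗ[R] (ι → R) := LinearMap.mk₂ R
    (fun a b k => ∑ i, ∑ j, a i * b j * τ i j k)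
    (by intros; ext k; simp [add_mul, Finset.sum_add_distrib])
    (by intros; ext k; simp [Finset.mul_sum, mul_assoc])
    (by intros; ext k; simp [mul_add, add_mul, Finset.sum_add_distrib])
    (by intros; ext k; simp [Finset.mul_sum, mul_assoc, mul_left_comm])
  have hV : ∀ a b k, V a b k = ∑ i, ∑ j, a i * b j * τ i j k := fun a b k => rfl
  have PhV : ∀ a b, Ph (V a b) = (φ ⬝ᵥ a) • b - (φ ⬝ᵥ b) • a := by
    intro a b
    ext l
    have : Ph (V a b) l = ∑ i, ∑ j, a i * b j * (- ∑ k, τ i j k * Φ k l) := by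
      rw [hPh]
      simp only [hV, Finset.mul_sum, ← Finset.sum_neg_distrib]
      rw [Finset.sum_comm]
      refine Finset.sum_congr rfl fun i _ => ?_
      rw [Finset.sum_comm]
      refine Finset.sum_congr rfl fun j _ => ?_
      refine Finset.sum_congr rfl fun k _ => ?_
      rw [skew l k]; ring
    rw [this]
    simp only [tt, neg_sub, mul_sub, Finset.sum_sub_distrib]
    simp [dotProduct, Finset.sum_mul]
    congr 1
    · refine Finset.sum_congr rfl fun j _ => by ring
    · refine Finset.sum_congr rfl fun j _ => by ring
  have VPh : ∀ a z, V a (Ph z) = (φ ⬝ᵥ a) • z - (a ⬝ᵥ z) • φ := by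
    intro a z
    ext k
    have : V a (Ph z) k = ∑ i, ∑ m, a i * z m * (∑ j, τ k i j * Φ j m) := by
      rw [hV]
      simp only [hPh, Finset.mul_sum, Finset.sum_mul]
      refine Finset.sum_congr rfl fun i _ => ?_
      rw [Finset.sum_comm]
      refine Finset.sum_congr rfl fun j _ => ?_
      refine Finset.sum_congr rfl fun m _ => ?_
      rw [cy k]; ring
    rw [this]
    simp only [tt, mul_sub, Finset.sum_sub_distrib]
    simp [dotProduct, Finset.sum_mul]
    congr 1
    · funext j; ring
  have Vaa : ∀ a, V a a = 0 := by
    intro a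
    ext k
    have h1 : V a a k = ∑ q : ι × ι, a q.1 * a q.2 * τ q.1 q.2 k := by
      rw [hV, Fintype.sum_prod_type]
    rw [h1]
    refine Finset.sum_involution (fun q _ => q.swap) ?_ ?_ ?_ ?_
    · rintro ⟨i, j⟩ -; simp only [Prod.swap]; rw [an i j]; ring
    · rintro ⟨i, j⟩ - h1 h2
      apply h1
      obtain ⟨h3, -⟩ := Prod.mk.inj h2
      simp only at h3
      simp only [h3, al, mul_zero]
    · simp
    · simp
  have Vm : ∀ a b i, V a b i ∈ I ^ 2 := fun a b i => by
    rw [hV]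
    exact sum_mem fun _ _ => sum_mem fun _ _ => Ideal.mul_mem_left _ _ (τm _ _ _)
  have phPh : ∀ z, φ ⬝ᵥ Ph z = 0 := by
    intro z
    simp only [dotProduct, hPh, Finset.mul_sum]
    rw [Finset.sum_comm]
    refine Finset.sum_eq_zero fun m _ => ?_
    have := congrArg (· * z m) (ff m)
    simpa [Finset.sum_mul, mul_assoc] using this
  have Phph : Ph φ = 0 := by
    ext l
    rw [hPh]
    have := congrArg (- ·) (ff l)
    simp only [← Finset.sum_neg_distrib, neg_zero] at this
    rw [Pi.zero_apply, ← this]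
    refine Finset.sum_congr rfl fun k _ => ?_
    rw [skew]; ring
  have hxI : ∀ s, x s ∈ I := fun s => by
    rw [← hI]; apply Ideal.subset_span; fin_cases s <;> simp
  have inj : ∀ s : R, s • φ = 0 → s = 0 := by
    intro s hs
    have h1 : x 0 ^ p * s = 0 := by
      obtain ⟨c, hc⟩ := hp
      have := congrFun hs i0
      simp at this
      rw [hc]; linear_combination c * this
    clear hp
    induction p with
    | zero => simpa using h1
    | succ p ih => exact ih (kf.k3 _ (by rw [← h1]; ring))
  have hN : ∃ N, I ^ N ≤ Ideal.span (Set.range φ) := by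
    apply Ideal.exists_pow_le_of_le_radical_of_fg
    · rw [← hI, Ideal.span_le]
      rintro a (rfl | rfl | rfl)
      · exact rad 0
      · exact rad 1
      · exact rad 2
    · rw [← hI]; exact Submodule.fg_span (by simp)
  have hspan : ∀ c ∈ Ideal.span (Set.range φ), ∃ a, φ ⬝ᵥ a = c := by
    intro c hc
    obtain ⟨a, ha⟩ := (Ideal.mem_span_range_iff_exists_fun).1 hc
    exact ⟨a, by rw [← ha]; simp [dotProduct, mul_comm]⟩
  have ex2 : ∀ z, Ph z = 0 → ∃ s : R, z = s • φ := by
    obtain ⟨N, hN⟩ := hN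
    intro z hz
    have := ann_descent x I hxI (LinearMap.ker Ph) (Submodule.span R {φ}) ?_ N z hz ?_
    · obtain ⟨s, hs⟩ := Submodule.mem_span_singleton.1 this
      exact ⟨s, hs.symm⟩
    · intro b hb h
      simp only [Submodule.mem_span_singleton] at h ⊢
      choose s hs using h
      have c0 : ∀ a b : R, a • φ = b • φ → a = b := fun a b hab =>
        sub_eq_zero.1 (inj _ (by rw [sub_smul, hab, sub_self]))
      obtain ⟨r, hr⟩ := kf.k2 s
        (c0 _ _ (by rw [mul_smul, mul_smul, hs, hs, smul_comm]))
        (c0 _ _ (by rw [mul_smul, mul_smul, hs, hs, smul_comm]))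
      refine ⟨r, ?_⟩
      have := hs 0
      rw [hr, mul_comm, mul_smul] at this
      ext i
      have := congrFun this i
      apply sub_eq_zero.1
      apply kf.k3
      simp at this ⊢
      linear_combination this
    · intro c hc
      obtain ⟨a, rfl⟩ := hspan c (hN hc)
      have := VPh a z
      rw [hz, map_zero] at this
      rw [Submodule.mem_span_singleton]
      exact ⟨_, (sub_eq_zero.1 this.symm).symm⟩
  have ex1 : ∀ b, φ ⬝ᵥ b = 0 → ∃ v, Ph v = b := by
    obtain ⟨N, hN⟩ := hN
    intro z hz
    have := ann_descent x I hxI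
      (LinearMap.ker (Matrix.mulVecLin (Matrix.of (fun (_ : Unit) => φ)))) (LinearMap.range Ph) ?_ N z ?_ ?_
    · exact this
    · intro b hb h
      simp only [LinearMap.mem_range] at h ⊢
      choose v hv using h
      have hs : ∀ i j, ∃ s : R, x i • v j - x j • v i = s • φ := fun i j =>
        ex2 _ (by rw [map_sub, map_smul, map_smul, hv, hv, smul_comm, sub_self])
      obtain ⟨s0, h0⟩ := hs 1 2
      obtain ⟨s1, h1⟩ := hs 2 0
      obtain ⟨s2, h2⟩ := hs 0 1
      obtain ⟨t, t0, t1, t2⟩ := kf.k1 ![s0, s1, s2] (by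
        apply inj
        simp only [Matrix.cons_val_zero, Matrix.cons_val_one, Matrix.cons_val, add_smul, mul_smul, ← h0, ← h1, ← h2]
        ext i; simp; ring)
      simp at t0 t1 t2
      have key : ∀ i, ∃ r, ∀ s, (v s - t s • φ) i = r * x s := by
        intro i
        have e0 := congrFun h0 i
        have e1 := congrFun h1 i
        have e2 := congrFun h2 i
        simp [t0, t1, t2] at e0 e1 e2
        apply kf.k2
        · simp; linear_combination e2
        · simp; linear_combination -e1
      choose r hr using key
      refine ⟨r, ?_⟩
      have e : x 0 • r = v 0 - t 0 • φ := by
        ext i; rw [hr]; simp [mul_comm]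
      have e2 : x 0 • Ph r = x 0 • b := by
        rw [← map_smul, e, map_sub, map_smul, Phph, smul_zero, sub_zero, hv]
      ext i
      have := congrFun e2 i
      apply sub_eq_zero.1
      apply kf.k3
      simp at this ⊢
      linear_combination this
    · rw [LinearMap.mem_ker]; ext i; simpa [Matrix.mulVec] using hz
    · intro c hc
      obtain ⟨a, rfl⟩ := hspan c (hN hc)
      exact ⟨V a z, by rw [PhV, hz, zero_smul, sub_zero]⟩
  exact ⟨⟨φ, Ph, V, PhV, VPh, Vaa, φm, Vm, phPh, Phph, ex1, ex2, inj⟩, rfl, hPh⟩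

/-! ### Part 4 : generic lifting lemmas and multiplicative resolutions -/

structure DGR (R : Type) [CommRing R] (I1 I2 I3 : Type) where
  d1 : (I1 → R) →ₗ[R] R
  d2 : (I2 → R) →ₗ[R] (I1 → R)
  d3 : (I3 → R) →ₗ[R] (I2 → R)
  m11 : (I1 → R) →ₗ[R] (I1 → R) →ₗ[R] (I2 → R)
  m12 : (I1 → R) →ₗ[R] (I2 → R) →ₗ[R] (I3 → R)
  c21 : ∀ z, d1 (d2 z) = 0
  c32 : ∀ z, d2 (d3 z) = 0
  e1 : ∀ a, d1 a = 0 → ∃ z, d2 z = a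
  e2 : ∀ z, d2 z = 0 → ∃ v, d3 v = z
  e3 : ∀ v, d3 v = 0 → v = 0
  l11 : ∀ a b, d2 (m11 a b) = d1 a • b - d1 b • a
  alt : ∀ a, m11 a a = 0
  l12 : ∀ a z, d3 (m12 a z) = d1 a • z - m11 a (d2 z)

theorem exists_bilin_lift {R : Type} [CommRing R] {A B M N : Type} [AddCommGroup A] [Module R A]
    [AddCommGroup B] [Module R B] [AddCommGroup M] [Module R M] [AddCommGroup N] [Module R N]
    (d : M →ₗ[R] N) (hd : ∀ v, d v = 0 → v = 0) (c : A →ₗ[R] B →ₗ[R] N)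
    (hc : ∀ a b, ∃ v, d v = c a b) : ∃ m : A →ₗ[R] B →ₗ[R] M, ∀ a b, d (m a b) = c a b := by
  choose f hf using hc
  have inj : ∀ u v, d u = d v → u = v := fun u v h =>
    sub_eq_zero.1 (hd _ (by rw [map_sub, h, sub_self]))
  refine ⟨LinearMap.mk₂ R f ?_ ?_ ?_ ?_, hf⟩ <;> intros <;> apply inj <;> simp [hf]

theorem exists_alt_lift {R : Type} [CommRing R] {K M N : Type} [Fintype K] [DecidableEq K]
    [AddCommGroup M] [Module R M] [AddCommGroup N] [Module R N]
    (d : M →ₗ[R] N) (S : Submodule R M) (c : (K → R) →ₗ[R] (K → R) →ₗ[R] N)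
    (hc : ∀ a b, ∃ v ∈ S, d v = c a b) (alt : ∀ a, c a a = 0) :
    ∃ W : (K → R) →ₗ[R] (K → R) →ₗ[R] M,
      (∀ a b, d (W a b) = c a b) ∧ (∀ a b, W a b ∈ S) ∧ ∀ a, W a a = 0 := by
  choose f hfS hf using fun i j : K => hc (Pi.single i 1) (Pi.single j 1)
  let e := Fintype.equivFin K
  have anti : ∀ a b, c a b = - c b a := by
    intro a b
    have := alt (a + b)
    simp [alt] at this
    rw [add_comm] at this
    exact eq_neg_of_add_eq_zero_right this
  let W : (K → R) →ₗ[R] (K → R) →ₗ[R] M := LinearMap.mk₂ R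
    (fun a b => ∑ i, ∑ j, if e i < e j then (a i * b j - a j * b i) • f i j else 0)
    (by
      intros; simp only [← Finset.sum_add_distrib]
      refine Finset.sum_congr rfl fun i _ => Finset.sum_congr rfl fun j _ => ?_
      split_ifs
      · rw [← add_smul]; congr 1; simp; ring
      · simp)
    (by
      intros; simp only [Finset.smul_sum]
      refine Finset.sum_congr rfl fun i _ => Finset.sum_congr rfl fun j _ => ?_
      split_ifs
      · rw [smul_smul]; congr 1; simp; ring
      · simp)
    (by
      intros; simp only [← Finset.sum_add_distrib]
      refine Finset.sum_congr rfl fun i _ => Finset.sum_congr rfl fun j _ => ?_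
      split_ifs
      · rw [← add_smul]; congr 1; simp; ring
      · simp)
    (by
      intros; simp only [Finset.smul_sum]
      refine Finset.sum_congr rfl fun i _ => Finset.sum_congr rfl fun j _ => ?_
      split_ifs
      · rw [smul_smul]; congr 1; simp; ring
      · simp)
  have hW : ∀ a b, W a b = ∑ i, ∑ j, if e i < e j then (a i * b j - a j * b i) • f i j else 0 :=
    fun a b => rfl
  have Waa : ∀ a, W a a = 0 := by
    intro a; rw [hW]
    refine Finset.sum_eq_zero fun i _ => Finset.sum_eq_zero fun j _ => ?_
    rw [mul_comm (a j), sub_self, zero_smul, ite_self]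
  have Wanti : ∀ a b, W a b = - W b a := by
    intro a b
    have := Waa (a + b)
    simp [Waa] at this
    rw [add_comm] at this
    exact eq_neg_of_add_eq_zero_right this
  have Wlt : ∀ i j, e i < e j → W (Pi.single i 1) (Pi.single j 1) = f i j := by
    intro i j hij
    rw [hW, Finset.sum_eq_single i, Finset.sum_eq_single j]
    · have : i ≠ j := by rintro rfl; exact lt_irrefl _ hij
      simp [hij, this]
    · intro b _ hb
      split_ifs with h
      · have : b ≠ i := by rintro rfl; exact lt_irrefl _ h
        simp [hb, this]
      · rfl
    · simp
    · intro b _ hb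
      refine Finset.sum_eq_zero fun k _ => ?_
      split_ifs with h
      · by_cases hk : k = i
        · subst hk
          have : b ≠ j := by rintro rfl; exact absurd h (not_lt.2 hij.le)
          simp [hb, this]
        · simp [hb, hk]
      · rfl
    · simp
  refine ⟨W, ?_, ?_, Waa⟩
  · have : W.compr₂ d = c := by
      ext i j
      simp only [LinearMap.compr₂_apply, LinearMap.coe_comp, Function.comp_apply, LinearMap.coe_single]
      rcases lt_trichotomy (e i) (e j) with h | h | h
      · rw [Wlt _ _ h, hf]
      · rw [e.injective h, Waa, alt, map_zero]
      · rw [Wanti, Wlt _ _ h, anti, map_neg, hf]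
    intro a b
    rw [← this]; rfl
  · intro a b
    rw [hW]
    refine sum_mem fun i _ => sum_mem fun j _ => ?_
    split_ifs
    · exact S.smul_mem _ (hfS _ _)
    · exact S.zero_mem

/-! ### Part 5 : the trimmed complex -/

section trim
variable {R : Type} [CommRing R]

def cr (x w : Fin 3 → R) : Fin 3 → R :=
  ![x 1 * w 2 - x 2 * w 1, x 2 * w 0 - x 0 * w 2, x 0 * w 1 - x 1 * w 0]

theorem lin_mem {x : Fin 3 → R} (kf : KFacts x) {I : Ideal R}
    (hI : Ideal.span {x 0, x 1, x 2} = I) (a : Fin 3 → R)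
    (h : x 0 * a 0 + x 1 * a 1 + x 2 * a 2 ∈ I ^ 2) : ∀ s, a s ∈ I := by
  have hxI : ∀ s, x s ∈ I := fun s => by
    rw [← hI]; apply Ideal.subset_span; fin_cases s <;> simp
  have key : ∀ c ∈ I * I, ∃ b : Fin 3 → R, (∀ s, b s ∈ I) ∧ c = x 0 * b 0 + x 1 * b 1 + x 2 * b 2 := by
    intro c hc
    refine Submodule.mul_induction_on hc ?_ ?_
    · intro m hm n hn
      rw [← hI, Ideal.mem_span_insert] at hm
      obtain ⟨p, q, hq, rfl⟩ := hm
      obtain ⟨p1, p2, rfl⟩ := Ideal.mem_span_pair.1 hq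
      refine ⟨![p * n, p1 * n, p2 * n], ?_, ?_⟩
      · intro s; fin_cases s <;> exact Ideal.mul_mem_left _ _ hn
      · simp; ring
    · rintro _ _ ⟨b, hb, rfl⟩ ⟨b', hb', rfl⟩
      exact ⟨b + b', fun s => add_mem (hb s) (hb' s), by simp; ring⟩
  obtain ⟨b, hb, e⟩ := key _ (by rwa [pow_two] at h)
  obtain ⟨w, w0, w1, w2⟩ := kf.k1 (a - b) (by simp; linear_combination e)
  have hm : ∀ s c, x s * c ∈ I := fun s c => Ideal.mul_mem_right _ _ (hxI s)
  intro s
  have : a s = b s + (a - b) s := by simp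
  rw [this]
  refine add_mem (hb s) ?_
  fin_cases s
  · exact w0 ▸ sub_mem (hm _ _) (hm _ _)
  · exact w1 ▸ sub_mem (hm _ _) (hm _ _)
  · exact w2 ▸ sub_mem (hm _ _) (hm _ _)

theorem cr_mem {x : Fin 3 → R} (kf : KFacts x) {I : Ideal R}
    (hI : Ideal.span {x 0, x 1, x 2} = I) (w : Fin 3 → R)
    (h : ∀ s, cr x w s ∈ I ^ 2) : ∀ s, w s ∈ I := by
  have h0 := h 0
  have h1 := h 1
  simp [cr] at h0 h1
  have a := lin_mem kf hI ![0, w 2, - w 1] (by simp; convert h0 using 1; ring)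
  have b := lin_mem kf hI ![-w 2, 0, w 0] (by simp; convert h1 using 1; ring)
  intro s
  fin_cases s
  · simpa using b 2
  · simpa using a 2
  · simpa using a 1

end trim

section trim2
variable {R : Type} [CommRing R] {ι : Type} [Fintype ι] [DecidableEq ι]

abbrev J1 (T : Finset ι) := {i // i ∉ T} ⊕ ({i // i ∈ T} × Fin 3)
abbrev J2 (T : Finset ι) := ι ⊕ ({i // i ∈ T} × Fin 3)
abbrev J3 (T : Finset ι) := Unit ⊕ {i // i ∈ T}

def alphaT (x : Fin 3 → R) (T : Finset ι) : (J1 T → R) →ₗ[R] (ι → R) where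
  toFun g i := if h : i ∈ T then x 0 * g (.inr (⟨i, h⟩, 0)) + x 1 * g (.inr (⟨i, h⟩, 1))
    + x 2 * g (.inr (⟨i, h⟩, 2)) else g (.inl ⟨i, h⟩)
  map_add' a b := by
    ext i; by_cases h : i ∈ T <;> simp [h]; ring
  map_smul' a b := by
    ext i; by_cases h : i ∈ T <;> simp [h]; ring

def crT (x : Fin 3 → R) (T : Finset ι) :
    ({i // i ∈ T} × Fin 3 → R) →ₗ[R] ({i // i ∈ T} × Fin 3 → R) where
  toFun w p := cr x (fun s => w (p.1, s)) p.2
  map_add' a b := by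
    ext ⟨i, s⟩; fin_cases s <;> simp [cr] <;> ring
  map_smul' a b := by
    ext ⟨i, s⟩; fin_cases s <;> simp [cr] <;> ring

theorem trim_exists {x : Fin 3 → R} (kf : KFacts x) {I : Ideal R}
    (hI : Ideal.span {x 0, x 1, x 2} = I) (D : FD I ι) (T : Finset ι)
    (Q : (ι → R) →ₗ[R] ({i // i ∈ T} × Fin 3 → R))
    (hQ : ∀ z (i : {i // i ∈ T}), D.Ph z i = x 0 * Q z (i, 0) + x 1 * Q z (i, 1) + x 2 * Q z (i, 2))
    (j0 : ι) (hj0 : j0 ∉ T) (hPj : ∀ u, D.Ph (Pi.single j0 1) u ∈ I)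
    (hQj : ∀ p, Q (Pi.single j0 1) p ∈ I) :
    ∃ X : DGR R (J1 T) (J2 T) (J3 T), (∀ a, X.d1 a ∈ I) ∧ (∀ v k, X.d3 v k ∈ I) ∧
      (∀ a b k, X.m11 a b k ∈ I) ∧
      (∀ z u, X.d2 z (.inl u) = D.Ph (fun i => z (.inl i)) u) ∧
      (∀ z p, X.d2 z (.inr p) = Q (fun i => z (.inl i)) p + crT x T (fun p => z (.inr p)) p) ∧
      (∀ a z, X.m12 a z (.inl ()) = alphaT x T a ⬝ᵥ (fun i => z (.inl i))) ∧
      (∀ a z, (∀ g, X.d2 z g ∈ I) → ∀ i, X.m12 a z (.inr i) ∈ I) := by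
  have hxI : ∀ s, x s ∈ I := fun s => by
    rw [← hI]; apply Ideal.subset_span; fin_cases s <;> simp
  let α := alphaT x T
  have αT : ∀ g (i : {i // i ∈ T}), α g i = x 0 * g (.inr (i, 0)) + x 1 * g (.inr (i, 1))
      + x 2 * g (.inr (i, 2)) := fun g i => by simp [α, alphaT]
  have αU : ∀ g (i : {i // i ∉ T}), α g i = g (.inl i) := fun g i => by
    simp only [α, alphaT, LinearMap.coe_mk, AddHom.coe_mk, dif_neg i.2]
  let pF : (J2 T → R) →ₗ[R] (ι → R) := LinearMap.funLeft R R Sum.inl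
  let pK : (J2 T → R) →ₗ[R] ({i // i ∈ T} × Fin 3 → R) := LinearMap.funLeft R R Sum.inr
  have hpF : ∀ z i, pF z i = z (.inl i) := fun _ _ => rfl
  have hpK : ∀ z i, pK z i = z (.inr i) := fun _ _ => rfl
  let ψ : (ι → R) →ₗ[R] (J1 T → R) := LinearMap.pi (fun g => match g with
    | .inl u => (LinearMap.proj u.1).comp D.Ph
    | .inr p => (LinearMap.proj p).comp Q)
  have ψU : ∀ z u, ψ z (.inl u) = D.Ph z u := fun _ _ => rfl
  have ψT : ∀ z u, ψ z (.inr u) = Q z u := fun _ _ => rfl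
  have αψ : ∀ z, α (ψ z) = D.Ph z := by
    intro z; ext i
    by_cases h : i ∈ T
    · have := αT (ψ z) ⟨i, h⟩
      simp only at this
      rw [this, ψT, ψT, ψT, ← hQ]
    · exact (αU (ψ z) ⟨i, h⟩).trans (ψU _ _)
  -- the inclusion of the Koszul part
  let κ : ({i // i ∈ T} × Fin 3 → R) →ₗ[R] (J1 T → R) := LinearMap.pi (fun g => match g with
    | .inl u => 0
    | .inr p => (LinearMap.proj p).comp (crT x T))
  have κU : ∀ z u, κ z (.inl u) = 0 := fun _ _ => rfl
  have κT : ∀ z u, κ z (.inr u) = crT x T z u := fun _ _ => rfl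
  have ακ : ∀ w, α (κ w) = 0 := by
    intro w; ext i
    by_cases h : i ∈ T
    · have := αT (κ w) ⟨i, h⟩
      simp only at this
      rw [this, κT, κT, κT]
      simp [crT, cr]; ring
    · exact (αU (κ w) ⟨i, h⟩).trans (κU _ _)
  have kerα : ∀ g, α g = 0 → ∃ w, κ w = g := by
    intro g hg
    have : ∀ i : {i // i ∈ T}, ∃ w : Fin 3 → R, ∀ s, g (.inr (i, s)) = cr x w s := by
      intro i
      obtain ⟨w, w0, w1, w2⟩ := kf.k1 (fun s => g (.inr (i, s))) (by rw [← αT, hg]; rfl)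
      refine ⟨w, fun s => ?_⟩
      fin_cases s <;> simpa [cr]
    choose w hw using this
    refine ⟨fun p => w p.1 p.2, ?_⟩
    ext (u | ⟨i, s⟩)
    · rw [κU, ← αU g u, hg]; rfl
    · rw [κT, hw]; rfl
  have κm : ∀ w, (∀ p, κ w (.inr p) ∈ I ^ 2) → ∀ p, w p ∈ I := by
    rintro w hw ⟨i, s⟩
    exact cr_mem kf hI (fun s => w (i, s)) (fun s => hw (i, s)) s
  have κ0 : ∀ w, κ w = 0 → ∃ u : {i // i ∈ T} → R, ∀ p, w p = u p.1 * x p.2 := by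
    intro w hw
    have : ∀ i : {i // i ∈ T}, ∃ u : R, ∀ s, w (i, s) = u * x s := by
      intro i
      have h2 := congrFun hw (.inr (i, 2))
      have h1 := congrFun hw (.inr (i, 1))
      rw [κT] at h1 h2
      simp [crT, cr] at h1 h2
      apply kf.k2 (fun s => w (i, s))
      · linear_combination h2
      · linear_combination -h1
    choose u hu using this
    exact ⟨u, fun p => hu p.1 p.2⟩
  let d1 : (J1 T → R) →ₗ[R] R := (dotProductBilin R R D.φ).comp α
  have hd1 : ∀ a, d1 a = D.φ ⬝ᵥ α a := fun a => rfl
  have d1m : ∀ a, d1 a ∈ I ^ 2 := fun a => by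
    rw [hd1]; exact sum_mem fun i _ => Ideal.mul_mem_right _ _ (D.φm i)
  have Qm : ∀ z, (∀ i, z i ∈ I ^ 2) → ∀ p, Q z p ∈ I ^ 2 := by
    intro z hz p
    have : z = ∑ i, z i • Pi.single i 1 := by
      ext j; simp [Finset.sum_apply, Pi.single_apply]
    rw [this, map_sum, Finset.sum_apply]
    refine sum_mem fun i _ => ?_
    rw [map_smul]
    exact Ideal.mul_mem_right _ _ (hz i)
  let Vα : (J1 T → R) →ₗ[R] (J1 T → R) →ₗ[R] (ι → R) := D.V.compl₁₂ α α
  have hVα : ∀ a b, Vα a b = D.V (α a) (α b) := fun _ _ => rfl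
  let c : (J1 T → R) →ₗ[R] (J1 T → R) →ₗ[R] (J1 T → R) :=
    LinearMap.mk₂ R (fun a b => d1 a • b - d1 b • a - ψ (Vα a b))
      (by intros; simp only [map_add, LinearMap.add_apply]; module)
      (by intros; simp only [map_smul, LinearMap.smul_apply, smul_eq_mul]; module)
      (by intros; simp only [map_add, LinearMap.add_apply]; module)
      (by intros; simp only [map_smul, LinearMap.smul_apply, smul_eq_mul]; module)
  have hc : ∀ a b, c a b = d1 a • b - d1 b • a - ψ (Vα a b) := fun _ _ => rfl
  have cI : ∀ a b p, c a b (.inr p) ∈ I ^ 2 := by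
    intro a b p
    rw [hc]
    refine sub_mem (sub_mem (Ideal.mul_mem_right _ _ (d1m a)) (Ideal.mul_mem_right _ _ (d1m b))) ?_
    exact Qm _ (fun i => D.Vm _ _ i) p
  obtain ⟨W, hW, WI, Waa⟩ := exists_alt_lift κ (Submodule.pi Set.univ (fun _ => I)) c (by
      intro a b
      obtain ⟨w, hw⟩ := kerα (c a b) (by
        rw [hc, map_sub, αψ, hVα, D.PhV, map_sub, map_smul, map_smul, hd1, hd1, sub_self])
      refine ⟨w, ?_, hw⟩
      simp only [Submodule.mem_pi]
      intro p _
      refine κm w ?_ p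
      rw [hw]; exact cI a b) (by
      intro a
      rw [hc, hVα, D.Vaa, map_zero, sub_self, sub_zero])
  simp only [Submodule.mem_pi, Set.mem_univ, forall_true_left] at WI
  have WI2 : ∀ a b, (∀ g, b g ∈ I) → ∀ p, W a b p ∈ I ^ 2 := by
    intro a b hb p
    have : b = ∑ i, b i • Pi.single i 1 := by
      ext j; simp [Finset.sum_apply, Pi.single_apply]
    rw [this, map_sum, Finset.sum_apply]
    refine sum_mem fun i _ => ?_
    rw [map_smul, pow_two]
    exact Ideal.mul_mem_mul (hb i) (WI _ _ _)
  let e0 : J1 T → R := Pi.single (.inl ⟨j0, hj0⟩) 1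
  have αe0 : α e0 = Pi.single j0 1 := by
    ext i
    by_cases h : i ∈ T
    · have := αT e0 ⟨i, h⟩
      simp only at this
      rw [this]
      have hne : i ≠ j0 := by rintro rfl; exact hj0 h
      simp [e0, hne]
    · have := αU e0 ⟨i, h⟩
      simp only at this
      rw [this]
      by_cases hi : i = j0
      · subst hi; simp [e0]
      · simp [e0, hi, Pi.single_apply]
  let h : {i // i ∈ T} × Fin 3 → R := - W e0 (ψ (Pi.single j0 1))
  have hh : ψ D.φ + κ h = 0 := by
    simp only [h, map_neg, hW, hc]
    rw [hd1 (ψ _), αψ, D.phPh, hVα, αψ, αe0, D.VPh, hd1, αe0]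
    simp
  have hI2 : ∀ p, h p ∈ I ^ 2 := by
    intro p
    refine neg_mem (WI2 _ _ ?_ p)
    rintro (u | p)
    · exact hPj u
    · exact hQj p
  let d2 : (J2 T → R) →ₗ[R] (J1 T → R) := ψ.comp pF + κ.comp pK
  have hd2 : ∀ z, d2 z = ψ (pF z) + κ (pK z) := fun _ => rfl
  let d3 : (J3 T → R) →ₗ[R] (J2 T → R) := LinearMap.pi (fun g => match g with
    | .inl j => D.φ j • LinearMap.proj (.inl ())
    | .inr p => h p • LinearMap.proj (.inl ()) + x p.2 • LinearMap.proj (.inr p.1))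
  have d3F : ∀ v, pF (d3 v) = v (.inl ()) • D.φ := fun v => by
    ext i; simp [pF, d3, LinearMap.funLeft, mul_comm]
  have d3K : ∀ v p, d3 v (.inr p) = h p * v (.inl ()) + x p.2 * v (.inr p.1) := fun v p => rfl
  have κx : ∀ u : {i // i ∈ T} → R, κ (fun p => x p.2 * u p.1) = 0 := by
    intro u; ext (a | ⟨i, s⟩)
    · rfl
    · rw [κT]; fin_cases s <;> simp [crT, cr] <;> ring
  have d3K' : ∀ v, κ (pK (d3 v)) = v (.inl ()) • κ h := by
    intro v
    have : pK (d3 v) = v (.inl ()) • h + (fun p => x p.2 * v (.inr p.1)) := by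
      ext p; rw [hpK, d3K]; simp [mul_comm]
    rw [this, map_add, map_smul, κx (fun i => v (.inr i)), add_zero]
  have c21 : ∀ z, d1 (d2 z) = 0 := by
    intro z; rw [hd1, hd2, map_add, αψ, ακ, add_zero, D.phPh]
  have c32 : ∀ z, d2 (d3 z) = 0 := by
    intro v; rw [hd2, d3F, d3K', map_smul, ← smul_add, hh, smul_zero]
  have ex1 : ∀ a, d1 a = 0 → ∃ z, d2 z = a := by
    intro a ha
    obtain ⟨v, hv⟩ := D.ex1 _ ha
    obtain ⟨w, hw⟩ := kerα (a - ψ v) (by rw [map_sub, αψ, hv, sub_self])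
    refine ⟨Sum.elim v w, ?_⟩
    have e1 : pF (Sum.elim v w) = v := rfl
    have e2 : pK (Sum.elim v w) = w := rfl
    rw [hd2, e1, e2, hw]; abel
  have ex2 : ∀ z, d2 z = 0 → ∃ v, d3 v = z := by
    intro z hz
    obtain ⟨s, hs⟩ := D.ex2 (pF z) (by
      have := congrArg α hz
      rwa [hd2, map_add, αψ, ακ, add_zero, map_zero] at this)
    have h2 : κ (pK z - s • h) = 0 := by
      rw [hd2, hs, map_smul, eq_neg_of_add_eq_zero_left hh, smul_neg, add_comm,
        ← sub_eq_add_neg] at hz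
      rw [map_sub, map_smul, hz]
    obtain ⟨u, hu⟩ := κ0 _ h2
    refine ⟨Sum.elim (fun _ => s) u, ?_⟩
    ext (i | p)
    · rw [← hpF (d3 _) i, d3F, ← hpF z i, hs]; rfl
    · rw [d3K]
      have := hu p
      simp [hpK] at this ⊢
      linear_combination -this
  have d3s : ∀ v, d3 v = 0 → v (.inl ()) = 0 := by
    intro v hv
    exact D.inj _ (by rw [← d3F, hv, map_zero])
  have ex3 : ∀ v, d3 v = 0 → v = 0 := by
    intro v hv
    ext (⟨⟩ | i)
    · exact d3s v hv
    · have := d3K v (i, 0)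
      rw [d3s v hv, hv] at this
      apply kf.k3
      simpa using this.symm
  let m11 : (J1 T → R) →ₗ[R] (J1 T → R) →ₗ[R] (J2 T → R) :=
    LinearMap.mk₂ R (fun a b => Sum.elim (Vα a b) (W a b))
      (by intros; ext (i | p) <;> simp)
      (by intros; ext (i | p) <;> simp)
      (by intros; ext (i | p) <;> simp)
      (by intros; ext (i | p) <;> simp)
  have m11F : ∀ a b, pF (m11 a b) = Vα a b := fun _ _ => rfl
  have m11K : ∀ a b, pK (m11 a b) = W a b := fun _ _ => rfl
  have l11 : ∀ a b, d2 (m11 a b) = d1 a • b - d1 b • a := by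
    intro a b
    rw [hd2, m11F, m11K, hW, hc]; abel
  have alt : ∀ a, m11 a a = 0 := by
    intro a
    ext (i | p)
    · rw [← hpF (m11 a a) i, m11F, hVα, D.Vaa]; rfl
    · rw [← hpK (m11 a a) p, m11K, Waa]; rfl
  obtain ⟨m12, l12⟩ := exists_bilin_lift d3 ex3
    (LinearMap.mk₂ R (fun a z => d1 a • z - m11 a (d2 z))
      (by intros; simp only [map_add, LinearMap.add_apply]; module)
      (by intros; simp only [map_smul, LinearMap.smul_apply, smul_eq_mul]; module)
      (by intros; simp only [map_add]; module)
      (by intros; simp only [map_smul]; module)) (by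
    intro a z
    apply ex2
    simp only [LinearMap.mk₂_apply]
    rw [map_sub, l11, c21, map_smul]; simp)
  simp only [LinearMap.mk₂_apply] at l12
  have hs : ∀ a z, m12 a z (.inl ()) = α a ⬝ᵥ pF z := by
    intro a z
    have := congrArg pF (l12 a z)
    rw [d3F, map_sub, m11F, hVα, hd2, map_add, αψ, ακ, add_zero, D.VPh, hd1, map_smul] at this
    rw [← sub_eq_zero]
    apply D.inj
    rw [sub_smul, this]; abel
  have sq : I ^ 2 ≤ I := Ideal.pow_le_self two_ne_zero
  refine ⟨⟨d1, d2, d3, m11, m12, c21, c32, ex1, ex2, ex3, l11, alt, l12⟩, ?_, ?_, ?_, ?_, ?_, ?_, ?_⟩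
  · exact fun a => sq (d1m a)
  · rintro v (i | p)
    · change pF (d3 v) i ∈ I; rw [d3F]; exact Ideal.mul_mem_left _ _ (sq (D.φm i))
    · simp only [d3K]; exact add_mem (Ideal.mul_mem_right _ _ (sq (hI2 p)))
        (Ideal.mul_mem_right _ _ (hxI _))
  · rintro a b (i | p)
    · change pF (m11 a b) i ∈ I; rw [m11F]; exact sq (D.Vm _ _ i)
    · change pK (m11 a b) p ∈ I; rw [m11K]; exact WI _ _ _
  · intro z u
    simp only [hd2, Pi.add_apply, ψU, κU, add_zero]; rfl
  · intro z p
    simp only [hd2, Pi.add_apply, ψT, κT]; rfl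
  · exact hs
  · intro a z hz i
    have := congrFun (l12 a z) (.inr (i, 0))
    rw [d3K] at this
    have h2 : x 0 * m12 a z (.inr i) ∈ I ^ 2 := by
      have e : x 0 * m12 a z (.inr i) = d1 a * z (.inr (i, 0)) - W a (d2 z) (i, 0)
          - h (i, 0) * m12 a z (.inl ()) := by
        rw [← m11K, hpK]
        simp at this
        linear_combination this
      rw [e]
      exact sub_mem (sub_mem (Ideal.mul_mem_right _ _ (d1m a)) (WI2 _ _ hz _))
        (Ideal.mul_mem_right _ _ (hI2 _))
    simpa using lin_mem kf hI ![m12 a z (.inr i), 0, 0] (by simpa using h2) 0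

end trim2

/-! ### Part 6 : cancellation of the unit block -/

section cancel
variable {R : Type} [CommRing R]

noncomputable def ext0 (R : Type) [CommRing R] {K : Type} (S : Set K) :
    ({g : K // g ∉ S} → R) →ₗ[R] (K → R) :=
  Function.ExtendByZero.linearMap R Subtype.val

theorem ext0_in {K : Type} (S : Set K) (a : {g : K // g ∉ S} → R) (g : K) (h : g ∈ S) :
    ext0 R S a g = 0 := by
  simp only [ext0, Function.ExtendByZero.linearMap_apply]
  rw [Function.extend_apply']
  · rfl
  · rintro ⟨⟨a, ha⟩, rfl⟩; exact ha h

theorem ext0_out {K : Type} (S : Set K) (a : {g : K // g ∉ S} → R) (g : {g : K // g ∉ S}) :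
    ext0 R S a g = a g := by
  simp only [ext0, Function.ExtendByZero.linearMap_apply]
  exact Subtype.val_injective.extend_apply _ _ _

theorem ext0_single {K : Type} [DecidableEq K] (S : Set K) (g : {g : K // g ∉ S}) :
    ext0 R S (Pi.single g 1) = Pi.single g.1 1 := by
  ext k
  by_cases h : k ∈ S
  · rw [ext0_in S _ k h, Pi.single_apply, if_neg]
    rintro rfl; exact g.2 h
  · rw [ext0_out S _ ⟨k, h⟩, Pi.single_apply, Pi.single_apply]
    simp [Subtype.ext_iff]

theorem ext0_restrict {K : Type} (S : Set K) (f : K → R) (h : ∀ g ∈ S, f g = 0) :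
    ext0 R S (fun g => f g) = f := by
  ext k
  by_cases hk : k ∈ S
  · rw [ext0_in S _ k hk, h k hk]
  · exact ext0_out S _ ⟨k, hk⟩

theorem cancel_exists {I1 I2 I3 Ct : Type} [DecidableEq I2] [Fintype Ct] [DecidableEq Ct]
    (X : DGR R I1 I2 I3) (c1 : Ct → I1) (c2 : Ct → I2) (i2 : Function.Injective c2)
    (eps : Ct → R) (he : ∀ t, eps t * eps t = 1)
    (hblk : ∀ t t', X.d2 (Pi.single (c2 t) 1) (c1 t') = if t = t' then eps t else 0) :
    ∃ (Y : DGR R {g : I1 // g ∉ Set.range c1} {g : I2 // g ∉ Set.range c2} I3)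
      (lam : ({g : I2 // g ∉ Set.range c2} → R) →ₗ[R] (I2 → R)),
      (∀ z, lam z = ext0 R _ z - ∑ t, (eps t * X.d2 (ext0 R _ z) (c1 t)) • Pi.single (c2 t) 1) ∧
      (∀ a, Y.d1 a = X.d1 (ext0 R _ a)) ∧
      (∀ z, X.d2 (lam z) = ext0 R _ (Y.d2 z)) ∧
      (∀ v k, Y.d3 v k = X.d3 v k) ∧
      (∀ a b k, Y.m11 a b k = X.m11 (ext0 R _ a) (ext0 R _ b) k) ∧
      (∀ a z, Y.m12 a z = X.m12 (ext0 R _ a) (lam z)) := by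
  let iA := ext0 R (Set.range c1)
  let iB := ext0 R (Set.range c2)
  let lam : ({g : I2 // g ∉ Set.range c2} → R) →ₗ[R] (I2 → R) :=
    iB - ∑ t, (eps t • ((LinearMap.proj (c1 t)).comp (X.d2.comp iB))).smulRight (Pi.single (c2 t) 1)
  have hlam : ∀ z, lam z = iB z - ∑ t, (eps t * X.d2 (iB z) (c1 t)) • Pi.single (c2 t) 1 := by
    intro z; simp [lam]
  have hl0 : ∀ z t, X.d2 (lam z) (c1 t) = 0 := by
    intro z t
    rw [hlam, map_sub, map_sum, Pi.sub_apply, Finset.sum_apply, Finset.sum_eq_single t]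
    · rw [map_smul, Pi.smul_apply, hblk, if_pos rfl, smul_eq_mul]
      linear_combination -(X.d2 (iB z) (c1 t)) * he t
    · intro b _ hb
      rw [map_smul, Pi.smul_apply, hblk, if_neg hb, smul_zero]
    · simp
  have hlk : ∀ z (k : {g : I2 // g ∉ Set.range c2}), lam z k = z k := by
    intro z k
    rw [hlam, Pi.sub_apply, Finset.sum_apply, Finset.sum_eq_zero, sub_zero]
    · exact ext0_out _ z k
    · intro t _
      have : k.1 ≠ c2 t := fun h => k.2 ⟨t, h.symm⟩
      simp [this]
  have hlt : ∀ z t, lam z (c2 t) = - (eps t * X.d2 (iB z) (c1 t)) := by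
    intro z t
    rw [hlam, Pi.sub_apply, Finset.sum_apply, Finset.sum_eq_single t]
    · rw [show iB z (c2 t) = 0 from ext0_in _ _ _ ⟨t, rfl⟩]; simp
    · intro b _ hb
      have : c2 t ≠ c2 b := fun h => hb (i2 h).symm
      simp [this]
    · simp
  let pA : (I1 → R) →ₗ[R] ({g : I1 // g ∉ Set.range c1} → R) := LinearMap.funLeft R R Subtype.val
  let pB : (I2 → R) →ₗ[R] ({g : I2 // g ∉ Set.range c2} → R) := LinearMap.funLeft R R Subtype.val
  have pBl : ∀ z, pB (lam z) = z := fun z => by ext k; exact hlk z k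
  have lpB : ∀ g, (∀ t, X.d2 g (c1 t) = 0) → lam (pB g) = g := by
    intro g hg
    have e : ∀ s, X.d2 (iB (pB g)) (c1 s) + eps s * g (c2 s) = 0 := by
      intro s
      have : iB (pB g) = g - ∑ t, g (c2 t) • Pi.single (c2 t) 1 := by
        ext k
        by_cases hk : k ∈ Set.range c2
        · rw [show iB (pB g) k = 0 from ext0_in _ _ _ hk]
          obtain ⟨t, rfl⟩ := hk
          rw [Pi.sub_apply, Finset.sum_apply, Finset.sum_eq_single t]
          · simp
          · intro b _ hb
            have : c2 t ≠ c2 b := fun h => hb (i2 h).symm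
            simp [this]
          · simp
        · rw [show iB (pB g) k = g k from ext0_out _ _ ⟨k, hk⟩]
          rw [Pi.sub_apply, Finset.sum_apply, Finset.sum_eq_zero, sub_zero]
          intro t _
          have : k ≠ c2 t := fun h => hk ⟨t, h.symm⟩
          simp [this]
      rw [this, map_sub, map_sum, Pi.sub_apply, Finset.sum_apply, hg, Finset.sum_eq_single s]
      · rw [map_smul, Pi.smul_apply, hblk, if_pos rfl, smul_eq_mul]; ring
      · intro b _ hb
        rw [map_smul, Pi.smul_apply, hblk, if_neg hb, smul_zero]
      · simp
    ext k
    by_cases hk : k ∈ Set.range c2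
    · obtain ⟨t, rfl⟩ := hk
      rw [hlt]
      linear_combination -eps t * e t + g (c2 t) * he t
    · exact hlk _ ⟨k, hk⟩
  have iApA : ∀ f, (∀ t, f (c1 t) = 0) → iA (pA f) = f := fun f hf =>
    ext0_restrict _ f (by rintro _ ⟨t, rfl⟩; exact hf t)
  have pAiA : ∀ a, pA (iA a) = a := fun a => by ext k; exact ext0_out _ a k
  have iA0 : ∀ a t, iA a (c1 t) = 0 := fun a t => ext0_in _ _ _ ⟨t, rfl⟩
  let d2 := pA.comp (X.d2.comp lam)
  have hd2 : ∀ z, iA (d2 z) = X.d2 (lam z) := fun z => iApA _ (hl0 z)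
  have l3 : ∀ v, lam (pB (X.d3 v)) = X.d3 v := fun v => lpB _ (by simp [X.c32])
  let m11 : ({g : I1 // g ∉ Set.range c1} → R) →ₗ[R] ({g : I1 // g ∉ Set.range c1} → R) →ₗ[R]
      ({g : I2 // g ∉ Set.range c2} → R) := (X.m11.compl₁₂ iA iA).compr₂ pB
  have hm11 : ∀ a b, m11 a b = pB (X.m11 (iA a) (iA b)) := fun _ _ => rfl
  have lm : ∀ a b, lam (m11 a b) = X.m11 (iA a) (iA b) := by
    intro a b
    rw [hm11]
    apply lpB
    intro t
    rw [X.l11]; simp [iA0]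
  let m12 : ({g : I1 // g ∉ Set.range c1} → R) →ₗ[R] ({g : I2 // g ∉ Set.range c2} → R) →ₗ[R]
      (I3 → R) := (X.m12.compl₁₂ iA lam)
  have hm12 : ∀ a b, m12 a b = X.m12 (iA a) (lam b) := fun _ _ => rfl
  refine ⟨⟨X.d1.comp iA, d2, pB.comp X.d3, m11, m12, ?_, ?_, ?_, ?_, ?_, ?_, ?_, ?_⟩, lam,
    hlam, fun _ => rfl, fun z => (hd2 z).symm, fun _ _ => rfl, fun _ _ _ => rfl, fun _ _ => rfl⟩
  · intro z; rw [LinearMap.comp_apply, hd2, X.c21]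
  · intro z
    change pA (X.d2 (lam (pB (X.d3 z)))) = 0
    rw [l3, X.c32, map_zero]
  · intro a ha
    obtain ⟨g, hg⟩ := X.e1 _ ha
    refine ⟨pB g, ?_⟩
    change pA (X.d2 (lam (pB g))) = a
    rw [lpB g (fun t => by rw [hg]; exact iA0 a t), hg, pAiA]
  · intro z hz
    obtain ⟨v, hv⟩ := X.e2 (lam z) (by rw [← hd2, hz, map_zero])
    refine ⟨v, ?_⟩
    change pB (X.d3 v) = z
    rw [hv, pBl]
  · intro v hv
    apply X.e3
    change pB (X.d3 v) = 0 at hv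
    rw [← l3, hv, map_zero]
  · intro a b
    change pA (X.d2 (lam (m11 a b))) = X.d1 (iA a) • b - X.d1 (iA b) • a
    rw [lm, X.l11, map_sub, map_smul, map_smul, pAiA, pAiA]
  · intro a; rw [hm11, X.alt, map_zero]
  · intro a z
    change pB (X.d3 (X.m12 (iA a) (lam z))) = X.d1 (iA a) • z - m11 a (d2 z)
    rw [X.l12, hm11, hd2, map_sub, map_smul, pBl]

end cancel

/-! ### Part 7 : assembly -/

theorem mem_smul_top_pi {R : Type} [CommRing R] (I : Ideal R) {K : Type} [Fintype K]
    [DecidableEq K] (f : K → R) (h : ∀ i, f i ∈ I) : f ∈ I • (⊤ : Submodule R (K → R)) := by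
  have : f = ∑ i, f i • Pi.single i 1 := by
    ext j; simp [Finset.sum_apply, Pi.single_apply]
  rw [this]
  exact sum_mem fun i _ => Submodule.smul_mem_smul (h i) trivial

theorem exists_equiv_extend {K : Type} [Fintype K] [DecidableEq K] (m r : ℕ) (hm : Fintype.card K = m)
    (p : Fin r → K) (hp : Function.Injective p) :
    ∃ (h : r ≤ m) (e : Fin m ≃ K), ∀ k : Fin r, e (Fin.castLE h k) = p k := by
  have h : r ≤ m := by
    have := Fintype.card_le_of_injective p hp
    simpa [hm] using this
  refine ⟨h, ?_⟩
  let f : Fin m ≃ K := (Fintype.equivFinOfCardEq hm).symm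
  let g1 : Fin r ≃ {i : Fin m // i ∈ Set.range (Fin.castLE h)} :=
    Equiv.ofInjective _ (Fin.castLE_injective h)
  let g2 : Fin r ≃ {i : Fin m // i ∈ Set.range (fun k => f.symm (p k))} :=
    Equiv.ofInjective _ (f.symm.injective.comp hp)
  classical
  let E := Equiv.extendSubtype (g1.symm.trans g2)
  refine ⟨E.trans f, fun k => ?_⟩
  have hk : Fin.castLE h k ∈ Set.range (Fin.castLE h) := ⟨k, rfl⟩
  have := Equiv.extendSubtype_apply_of_mem (g1.symm.trans g2) _ hk
  simp only [Equiv.trans_apply, E, this]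
  have e : g1.symm ⟨Fin.castLE h k, hk⟩ = k := by
    rw [Equiv.symm_apply_eq]; rfl
  rw [e]
  exact f.apply_symm_apply _

def DGR.reindex {R : Type} [CommRing R] {I1 I2 I3 K1 K2 K3 : Type} (X : DGR R I1 I2 I3)
    (e1 : K1 ≃ I1) (e2 : K2 ≃ I2) (e3 : K3 ≃ I3) : DGR R K1 K2 K3 where
  d1 := X.d1.comp (LinearMap.funLeft R R e1.symm)
  d2 := (LinearMap.funLeft R R e1).comp (X.d2.comp (LinearMap.funLeft R R e2.symm))
  d3 := (LinearMap.funLeft R R e2).comp (X.d3.comp (LinearMap.funLeft R R e3.symm))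
  m11 := (X.m11.compl₁₂ (LinearMap.funLeft R R e1.symm)
    (LinearMap.funLeft R R e1.symm)).compr₂ (LinearMap.funLeft R R e2)
  m12 := (X.m12.compl₁₂ (LinearMap.funLeft R R e1.symm)
    (LinearMap.funLeft R R e2.symm)).compr₂ (LinearMap.funLeft R R e3)
  c21 z := by
    have : ∀ f : I1 → R, LinearMap.funLeft R R e1.symm (LinearMap.funLeft R R e1 f) = f := by
      intro f; ext i; simp [LinearMap.funLeft]
    simp only [LinearMap.comp_apply, this, X.c21]
  c32 z := by
    have : ∀ f : I2 → R, LinearMap.funLeft R R e2.symm (LinearMap.funLeft R R e2 f) = f := by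
      intro f; ext i; simp [LinearMap.funLeft]
    simp only [LinearMap.comp_apply, this, X.c32, map_zero]
  e1 a ha := by
    obtain ⟨z, hz⟩ := X.e1 _ ha
    refine ⟨LinearMap.funLeft R R e2 z, ?_⟩
    have : ∀ f : I2 → R, LinearMap.funLeft R R e2.symm (LinearMap.funLeft R R e2 f) = f := by
      intro f; ext i; simp [LinearMap.funLeft]
    simp only [LinearMap.comp_apply, this, hz]
    ext i; simp [LinearMap.funLeft]
  e2 a ha := by
    obtain ⟨z, hz⟩ := X.e2 (LinearMap.funLeft R R e2.symm a) (by
      ext i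
      have := congrFun ha (e1.symm i)
      simpa [LinearMap.funLeft] using this)
    refine ⟨LinearMap.funLeft R R e3 z, ?_⟩
    have : ∀ f : I3 → R, LinearMap.funLeft R R e3.symm (LinearMap.funLeft R R e3 f) = f := by
      intro f; ext i; simp [LinearMap.funLeft]
    simp only [LinearMap.comp_apply, this, hz]
    ext i; simp [LinearMap.funLeft]
  e3 v hv := by
    have := X.e3 (LinearMap.funLeft R R e3.symm v) (by
      ext i
      have := congrFun hv (e2.symm i)
      simpa [LinearMap.funLeft] using this)
    ext i
    have := congrFun this (e3 i)
    simpa [LinearMap.funLeft] using this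
  l11 a b := by
    have : ∀ f : I2 → R, LinearMap.funLeft R R e2.symm (LinearMap.funLeft R R e2 f) = f := by
      intro f; ext i; simp [LinearMap.funLeft]
    have h2 : ∀ f : K1 → R, LinearMap.funLeft R R e1 (LinearMap.funLeft R R e1.symm f) = f := by
      intro f; ext i; simp [LinearMap.funLeft]
    simp only [LinearMap.comp_apply, LinearMap.compr₂_apply, LinearMap.compl₁₂_apply, this, X.l11,
      map_sub, map_smul, h2]
  alt a := by
    simp only [LinearMap.compr₂_apply, LinearMap.compl₁₂_apply, X.alt, map_zero]
  l12 a z := by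
    have h3 : ∀ f : I3 → R, LinearMap.funLeft R R e3.symm (LinearMap.funLeft R R e3 f) = f := by
      intro f; ext i; simp [LinearMap.funLeft]
    have h1 : ∀ f : I1 → R, LinearMap.funLeft R R e1.symm (LinearMap.funLeft R R e1 f) = f := by
      intro f; ext i; simp [LinearMap.funLeft]
    have h2 : ∀ f : K2 → R, LinearMap.funLeft R R e2 (LinearMap.funLeft R R e2.symm f) = f := by
      intro f; ext i; simp [LinearMap.funLeft]
    simp only [LinearMap.comp_apply, LinearMap.compr₂_apply, LinearMap.compl₁₂_apply, h3, X.l12,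
      map_sub, map_smul, h2, h1]

theorem DGR.anti {R : Type} [CommRing R] {I1 I2 I3 : Type} (X : DGR R I1 I2 I3) (a b) :
    X.m11 a b = - X.m11 b a := by
  have := X.alt (a + b)
  simp [X.alt] at this
  rw [add_comm] at this
  exact eq_neg_of_add_eq_zero_right this

theorem DGR.assoc {R : Type} [CommRing R] {I1 I2 I3 : Type} (X : DGR R I1 I2 I3) (a b c) :
    X.m12 c (X.m11 a b) = X.m12 a (X.m11 b c) := by
  rw [← sub_eq_zero]
  apply X.e3
  rw [map_sub, X.l12, X.l12, X.l11, X.l11, map_sub, map_sub, map_smul, map_smul, map_smul, map_smul,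
    X.anti c b, X.anti c a]
  module

theorem assemble {R : Type} [CommRing R] [IsLocalRing R] {I1 I2 I3 : Type} [Fintype I1]
    [Fintype I2] [Fintype I3] [DecidableEq I1] [DecidableEq I2] [DecidableEq I3]
    (Y : DGR R I1 I2 I3) (m n r : ℕ) (h1 : Fintype.card I1 = m) (h3 : Fintype.card I3 = n)
    (p1 : Fin r → I1) (p2 : Fin r → I2) (hp1 : Function.Injective p1) (hp2 : Function.Injective p2)
    (g0 : I3) (md1 : ∀ a, Y.d1 a ∈ maximalIdeal R) (md2 : ∀ a k, Y.d2 a k ∈ maximalIdeal R)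
    (md3 : ∀ a k, Y.d3 a k ∈ maximalIdeal R) (mm : ∀ a b k, Y.m11 a b k ∈ maximalIdeal R)
    (nf : ∀ a b i, Y.m12 (Pi.single a 1) (Pi.single b 1) i -
      (if (∃ k, p1 k = a ∧ p2 k = b) ∧ i = g0 then 1 else 0) ∈ maximalIdeal R) :
    ∃ J : Ideal R, HasTorClassGWithRanks R J m n r := by
  obtain ⟨le1, e1, he1⟩ := exists_equiv_extend m r h1 p1 hp1
  obtain ⟨le2, e2, he2⟩ := exists_equiv_extend _ r rfl p2 hp2
  obtain ⟨le3, e3, he3⟩ := exists_equiv_extend n 1 h3 (fun _ => g0) (fun _ _ _ => Subsingleton.elim _ _)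
  have hz : e3 ⟨0, le3⟩ = g0 := he3 0
  let Z := Y.reindex e1 e2 e3
  refine ⟨LinearMap.range Z.d1, Fintype.card I2, le3, le1, le2, Z.d1, Z.d2, Z.d3, Z.m11, Z.m12, rfl,
    ?_, ?_, ?_, ?_, ?_, ?_, Z.l11, Z.alt, Z.anti, Z.l12, Z.assoc, ?_, ?_⟩
  · ext a; exact ⟨Z.e1 a, by rintro ⟨z, rfl⟩; exact Z.c21 z⟩
  · ext a; exact ⟨Z.e2 a, by rintro ⟨z, rfl⟩; exact Z.c32 z⟩
  · rw [eq_bot_iff]; intro v hv; exact Z.e3 v hv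
  · intro v; exact md1 _
  · intro v; exact mem_smul_top_pi _ _ fun i => md2 _ _
  · intro v; exact mem_smul_top_pi _ _ fun i => md3 _ _
  · intro a b; exact mem_smul_top_pi _ _ fun i => mm _ _ _
  · intro a b
    refine mem_smul_top_pi _ _ fun i => ?_
    have key := nf (e1 a) (e2 b) (e3 i)
    have s1 : LinearMap.funLeft R R e1.symm (Pi.single a 1) = Pi.single (e1 a) 1 := by
      ext k; simp [LinearMap.funLeft, Pi.single_apply, Equiv.symm_apply_eq]
    have s2 : LinearMap.funLeft R R e2.symm (Pi.single b 1) = Pi.single (e2 b) 1 := by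
      ext k; simp [LinearMap.funLeft, Pi.single_apply, Equiv.symm_apply_eq]
    have s3 : Z.m12 (Pi.single a 1) (Pi.single b 1) i =
        Y.m12 (Pi.single (e1 a) 1) (Pi.single (e2 b) 1) (e3 i) := by
      rw [← s1, ← s2]; rfl
    have s4 : (∃ k, p1 k = e1 a ∧ p2 k = e2 b) ↔ ((a : ℕ) = b ∧ (a : ℕ) < r) := by
      constructor
      · rintro ⟨k, ka, kb⟩
        rw [← he1, e1.apply_eq_iff_eq] at ka
        rw [← he2, e2.apply_eq_iff_eq] at kb
        subst ka kb
        simp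
      · rintro ⟨hab, har⟩
        refine ⟨⟨a, har⟩, ?_, ?_⟩
        · rw [← he1]; rfl
        · rw [← he2]; congr 1; ext; simpa using hab
    have s5 : e3 i = g0 ↔ i = ⟨0, le3⟩ := by
      rw [← hz, e3.apply_eq_iff_eq]
    rw [Pi.sub_apply, s3]
    convert key using 2
    simp only [s4, s5]
    by_cases h : (a : ℕ) = b ∧ (a : ℕ) < r
    · simp only [eq_true h, if_true, Pi.single_apply, true_and]
    · simp [h]

/-! ### Part 8 : the concrete banded matrix -/

section concrete
variable {R : Type} [CommRing R]

def AA (x δ : R) (k : ℤ) : R :=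
  if k = 0 then 1 else if k = -1 then -1 else if k = 1 then δ else if k = -2 then -δ
  else if 0 ≤ k then x else -x

def BB (y : R) (k : ℤ) : R :=
  if k = 1 then 1 else if k = 0 then -1 else if 1 ≤ k then y else -y

def CC (z : R) (k : ℤ) : R :=
  if k = 0 then 0 else if 0 < k then -z else z

/-- the three coefficient matrices -/
def qq (x : Fin 3 → R) (δ : R) (s : Fin 3) (i j : ℤ) : R :=
  ![if i = -j - 1 then AA (x 0) δ j else 0, if i = 1 - j then BB (x 1) j else 0,
    if i = -j then CC (x 2) j else 0] s

def PhiM (x : Fin 3 → R) (δ : R) (i j : ℤ) : R :=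
  x 0 * qq x δ 0 i j + x 1 * qq x δ 1 i j + x 2 * qq x δ 2 i j

theorem AA_neg (x δ : R) (l : ℤ) : AA x δ (-1 - l) = - AA x δ l := by
  unfold AA; split_ifs <;> first | omega | simp
theorem BB_neg (x : R) (l : ℤ) : BB x (1 - l) = - BB x l := by
  unfold BB; split_ifs <;> first | omega | simp
theorem CC_neg (x : R) (l : ℤ) : CC x (-l) = - CC x l := by
  unfold CC; split_ifs <;> first | omega | simp

theorem qq_skew (x : Fin 3 → R) (δ : R) (s : Fin 3) (i j : ℤ) : qq x δ s i j = - qq x δ s j i := by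
  fin_cases s
  · simp only [qq, Fin.zero_eta, Matrix.cons_val_zero]
    by_cases h : i = -j - 1
    · rw [if_pos h, if_pos (by omega), show i = -1 - j by omega, AA_neg, neg_neg]
    · rw [if_neg h, if_neg (by omega), neg_zero]
  · simp only [qq, Fin.mk_one, Matrix.cons_val_one]
    by_cases h : i = 1 - j
    · simp only [h, if_true, BB_neg]; simp
    · simp [h, show ¬ (j = 1 - i) by omega]
  · simp only [qq, Fin.reduceFinMk, Matrix.cons_val]
    by_cases h : i = -j
    · simp only [h, if_true, CC_neg]; simp
    · simp only [if_neg h, show ¬ (j = -i) by omega, if_false, neg_zero]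

theorem PhiM_skew (x : Fin 3 → R) (δ : R) (i j : ℤ) : PhiM x δ i j = - PhiM x δ j i := by
  unfold PhiM
  rw [qq_skew x δ 0, qq_skew x δ 1, qq_skew x δ 2]; ring

abbrev IZ (n : ℕ) := {i : ℤ // i ∈ Finset.Icc (-(n : ℤ)) n}

theorem sum_PhiM (x : Fin 3 → R) (δ : R) (n : ℕ) (f : ℤ → R) (hf : ∀ i, (n : ℤ) < |i| → f i = 0)
    (l : ℤ) : ∑ m : IZ n, f m * PhiM x δ m l =
      GS (fun k => x 0 * AA (x 0) δ k) (fun k => x 1 * BB (x 1) k) (fun k => x 2 * CC (x 2) k) f l := by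
  have h0 : ∀ (c : ℤ) (a : R), ∑ m ∈ Finset.Icc (-(n : ℤ)) n, f m * (if m = c then a else 0) = f c * a := by
    intro c a
    rw [Finset.sum_eq_single c]
    · simp
    · intro b _ hb; simp [hb]
    · intro hc
      rw [hf c, zero_mul]
      by_contra h
      apply hc
      rw [Finset.mem_Icc]
      exact abs_le.1 (not_lt.1 h)
  rw [Finset.sum_coe_sort (Finset.Icc (-(n : ℤ)) n) (fun m => f m * PhiM x δ m l)]
  unfold PhiM GS
  have : ∀ m, f m * (x 0 * qq x δ 0 m l + x 1 * qq x δ 1 m l + x 2 * qq x δ 2 m l) =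
      f m * (if m = -l - 1 then x 0 * AA (x 0) δ l else 0) +
      f m * (if m = 1 - l then x 1 * BB (x 1) l else 0) +
      f m * (if m = - l then x 2 * CC (x 2) l else 0) := by
    intro m
    simp [qq, mul_add]
  simp only [this, Finset.sum_add_distrib, h0]
  ring

theorem exists_FD (x : Fin 3 → R) (kf : KFacts x) (I : Ideal R)
    (hI : Ideal.span {x 0, x 1, x 2} = I) (δ : R) (hδ : δ ∣ x 0) (n : ℕ) (hn : 3 ≤ n) :
    ∃ D : FD I (IZ n), ∀ z l, D.Ph z l = ∑ m : IZ n, PhiM x δ l m * z m := by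
  have hxI : ∀ s, x s ∈ I := fun s => by
    rw [← hI]; apply Ideal.subset_span; fin_cases s <;> simp
  have hm : ∀ s c, x s * c ∈ I := fun s c => Ideal.mul_mem_right _ _ (hxI s)
  obtain ⟨f0, f1, t0, t1, g, -, h1, -, k1, hx, hy, hz⟩ := Gor_exists
    (A := fun k => x 0 * AA (x 0) δ k) (B := fun k => x 1 * BB (x 1) k)
    (C := fun k => x 2 * CC (x 2) k)
    (fun l => by simp [AA_neg]) (fun l => by simp [BB_neg]) (fun l => by simp [CC_neg]) I
    (x 0) (x 1) (x 2) (fun _ => hm _ _) (fun _ => hm _ _) (fun _ => hm _ _)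
    (fun l => by
      rw [pow_two]; apply mul_dvd_mul_left
      unfold AA; split_ifs <;> simp [hδ])
    (fun l => dvd_mul_right _ _)
    (fun l => by
      rw [pow_two]; apply mul_dvd_mul_left
      unfold BB; split_ifs <;> simp)
    (by simp [CC])
    (fun k => by
      simp only [CC]
      rw [if_neg (by omega), if_pos (by omega)]; ring) n
  have t1s : ∀ i j k, (n : ℤ) < |k| → t1 i j k = 0 := fun i j k hk => by
    rw [← g.cy1 k i j, g.st1 _ _ _ hk]
  have mI : ∀ l : IZ n, |l.1| ≤ n := fun l => abs_le.2 (Finset.mem_Icc.1 l.2)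
  have hr0 : x 0 ∈ (Ideal.span (Set.range fun i : IZ n => f1 i)).radical := by
    refine ⟨2 * n, ?_⟩
    obtain ⟨c, hc⟩ := hx
    rw [hc]
    exact Ideal.mul_mem_right _ _ (Ideal.subset_span ⟨⟨n, by simp⟩, rfl⟩)
  have hr1 : x 1 ∈ (Ideal.span (Set.range fun i : IZ n => f1 i)).radical := by
    refine ⟨2 * n, ?_⟩
    obtain ⟨c, hc⟩ := hy
    rw [hc]
    exact Ideal.mul_mem_right _ _ (Ideal.subset_span ⟨⟨-n, by simp⟩, rfl⟩)
  have hr2 : x 2 ∈ (Ideal.span (Set.range fun i : IZ n => f1 i)).radical := by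
    apply Ideal.mem_radical_of_pow_mem (m := 2 * n)
    obtain ⟨c, hc⟩ := hz
    rw [show x 2 ^ (2 * n) = f1 0 - x 0 * c by rw [← hc]; ring]
    exact sub_mem (Ideal.le_radical (Ideal.subset_span ⟨⟨0, by simp⟩, rfl⟩))
      (Ideal.mul_mem_right _ _ hr0)
  let E := FD.mk' x kf I hI (IZ n) (fun i => f1 i) (fun i j => PhiM x δ i j)
    (fun i j k => t1 i j k) (fun i j => PhiM_skew x δ i j) (fun i j k => g.cy1 i j k)
    (fun i j k => g.an1 i j k) (fun i k => g.al1 i k)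
    (fun l => by rw [sum_PhiM x δ n f1 g.sf1, g.ff l (mI l)])
    (fun i j l => by
      rw [sum_PhiM x δ n (t1 i j) (fun k hk => t1s _ _ k hk), g.tt i j l (mI l)]
      simp only [Subtype.ext_iff])
    (fun i => Ideal.pow_le_pow_right (by omega) (h1 i))
    (fun i j k => Ideal.pow_le_pow_right (by omega) (k1 i j k))
    (fun s => by fin_cases s; exacts [hr0, hr1, hr2])
    ⟨n, by simp⟩ (2 * n) hx
  exact ⟨E.1, E.2.2⟩

end concrete

/-! ### Part 9 : the final construction -/

section final
variable {R : Type} [CommRing R]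

theorem AA_mem {x δ : R} {I : Ideal R} (hx : x ∈ I) (k : ℤ) (h0 : k ≠ 0) (h1 : k ≠ -1)
    (h2 : k ≠ 1) (h3 : k = -2 → δ ∈ I) : AA x δ k ∈ I := by
  unfold AA
  rw [if_neg h0, if_neg h1, if_neg h2]
  split_ifs with h
  · exact neg_mem (h3 h)
  · exact hx
  · exact neg_mem hx

theorem BB_mem {x : R} {I : Ideal R} (hx : x ∈ I) (k : ℤ) (h0 : k ≠ 0)
    (h2 : k ≠ 1) : BB x k ∈ I := by
  unfold BB
  rw [if_neg h2, if_neg h0]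
  split_ifs
  · exact hx
  · exact neg_mem hx

theorem CC_mem {x : R} {I : Ideal R} (hx : x ∈ I) (k : ℤ) : CC x k ∈ I := by
  unfold CC
  split_ifs
  · exact zero_mem _
  · exact neg_mem hx
  · exact hx

theorem qq_mem {x : Fin 3 → R} {δ : R} {I : Ideal R} (hx : ∀ s, x s ∈ I) (s : Fin 3) (i k : ℤ)
    (h0 : k ≠ 0) (h1 : k ≠ -1) (h2 : k ≠ 1) (h3 : k = -2 → δ ∈ I) : qq x δ s i k ∈ I := by
  fin_cases s
  · simp only [qq, Fin.zero_eta, Matrix.cons_val_zero]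
    split_ifs
    · exact AA_mem (hx 0) k h0 h1 h2 h3
    · exact zero_mem _
  · change (if i = 1 - k then BB (x 1) k else 0) ∈ I
    split_ifs
    · exact BB_mem (hx 1) k h0 h2
    · exact zero_mem _
  · change (if i = - k then CC (x 2) k else 0) ∈ I
    split_ifs
    · exact CC_mem (hx 2) k
    · exact zero_mem _

def jC : Fin 4 → ℤ := ![-1, 1, 0, -2]
def iC : Fin 4 → ℤ := ![0, 0, -1, 1]
def sC : Fin 4 → Fin 3 := ![0, 1, 0, 0]
def eC (R : Type) [CommRing R] : Fin 4 → R := ![-1, 1, 1, -1]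

theorem qq_block (x : Fin 3 → R) (δ : R) (t t' : Fin 4) (h : t = 3 → δ = 1) :
    qq x δ (sC t') (iC t') (jC t) = if t = t' then eC R t else 0 := by
  fin_cases t <;> fin_cases t' <;> simp [qq, sC, iC, jC, eC, AA, BB]
  exact h rfl

set_option maxHeartbeats 4000000 in
theorem main_aux [IsLocalRing R] (x : Fin 3 → R) (kf : KFacts x)
    (hx : Ideal.span {x 0, x 1, x 2} = maximalIdeal R) (m n r l e : ℕ)
    (harith : r + 3 * (n - 2) = m) (hr : 2 ≤ r) (hn : 4 ≤ n) (he : e ≤ 1) (hl : 3 ≤ l)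
    (hle : 2 * l + 1 = r + (n - 1) + e) :
    ∃ J : Ideal R, HasTorClassGWithRanks R J m n r := by
  classical
  have hxI : ∀ s, x s ∈ maximalIdeal R := fun s => by
    rw [← hx]; apply Ideal.subset_span; fin_cases s <;> simp
  obtain ⟨δ, hδ, hδ1, hδ0⟩ : ∃ δ : R, δ ∣ x 0 ∧ (e = 1 → δ = 1) ∧ (e = 0 → δ ∈ maximalIdeal R) := by
    by_cases h : e = 1
    · exact ⟨1, one_dvd _, fun _ => rfl, fun h0 => by omega⟩
    · exact ⟨x 0, dvd_rfl, fun h1 => absurd h1 h, fun _ => hxI 0⟩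
  obtain ⟨D, hD⟩ := exists_FD x kf _ hx δ hδ l hl
  have hmem : ∀ k : ℤ, |k| ≤ 3 → k ∈ Finset.Icc (-(l : ℤ)) l := fun k hk => by
    rw [Finset.mem_Icc]; have := abs_le.1 hk; omega
  have cardI : Fintype.card (IZ l) = 2 * l + 1 := by
    rw [Fintype.card_coe, Int.card_Icc]; omega
  let z0 : IZ l := ⟨0, hmem 0 (by norm_num)⟩
  let z1 : IZ l := ⟨1, hmem 1 (by norm_num)⟩
  let z2 : IZ l := ⟨-1, hmem (-1) (by norm_num)⟩
  let z3 : IZ l := ⟨-2, hmem (-2) (by norm_num)⟩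
  obtain ⟨T, hT1, hT2, hT3⟩ := Finset.exists_subsuperset_card_eq
    (s := ({z0, z1, z2} : Finset (IZ l))) (t := Finset.univ.erase z3) (n := n - 1)
    (by
      intro a ha
      simp only [Finset.mem_insert, Finset.mem_singleton] at ha
      simp only [Finset.mem_erase, Finset.mem_univ, and_true]
      rcases ha with rfl | rfl | rfl <;> simp [z0, z1, z2, z3])
    (le_trans Finset.card_le_three (by omega))
    (by rw [Finset.card_erase_of_mem (Finset.mem_univ _), Finset.card_univ, cardI]; omega)
  have T0 : z0 ∈ T := hT1 (by simp)
  have T1 : z1 ∈ T := hT1 (by simp)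
  have T2 : z2 ∈ T := hT1 (by simp)
  have T3 : z3 ∉ T := fun h => by simpa using hT2 h
  let Q : (IZ l → R) →ₗ[R] ({i // i ∈ T} × Fin 3 → R) :=
    Matrix.mulVecLin (Matrix.of fun p j => qq x δ p.2 p.1.1 j.1)
  have hQ : ∀ z p, Q z p = ∑ j : IZ l, qq x δ p.2 p.1.1 j.1 * z j := fun _ _ => rfl
  have hQs : ∀ j p, Q (Pi.single j 1) p = qq x δ p.2 p.1.1 j.1 := fun j p => by
    rw [hQ, Finset.sum_eq_single j]
    · simp
    · intro b _ hb; simp [hb]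
    · simp
  have hPhm : ∀ z u, D.Ph z u ∈ maximalIdeal R := by
    intro z u
    rw [hD]
    refine sum_mem fun j _ => Ideal.mul_mem_right _ _ ?_
    exact add_mem (add_mem (Ideal.mul_mem_right _ _ (hxI _)) (Ideal.mul_mem_right _ _ (hxI _)))
      (Ideal.mul_mem_right _ _ (hxI _))
  -- the paired indices
  let T' : Finset (IZ l) := if e = 1 then insert z3 T else T
  have memT' : ∀ i, i ∈ T' ↔ i ∈ T ∨ (e = 1 ∧ i = z3) := by
    intro i; by_cases h : e = 1 <;> simp [T', h, or_comm]
  have cT' : T'.card = n - 1 + e := by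
    by_cases h : e = 1
    · simp [T', h, Finset.card_insert_of_notMem T3, hT3]
    · simp [T', h, hT3]; omega
  have cP : Fintype.card {i // i ∉ T'} = r := by
    rw [Fintype.card_subtype_compl, cardI, Fintype.card_coe, cT']; omega
  let π : Fin r ≃ {i // i ∉ T'} := (Fintype.equivFinOfCardEq cP).symm
  have qm : ∀ i j : IZ l, j ∉ T' → ∀ s (k : ℤ), qq x δ s k j.1 ∈ maximalIdeal R := by
    intro i j hj s k
    rw [memT'] at hj
    push Not at hj
    apply qq_mem hxI
    · intro h; apply hj.1; rwa [show j = z0 from Subtype.ext h]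
    · intro h; apply hj.1; rwa [show j = z2 from Subtype.ext h]
    · intro h; apply hj.1; rwa [show j = z1 from Subtype.ext h]
    · intro h
      apply hδ0
      by_contra h0
      exact hj.2 (by omega) (Subtype.ext h)
  let j0 := π ⟨0, by omega⟩
  obtain ⟨X, X1, X3, X11, X2F, X2K, Xs, Xu⟩ := trim_exists kf hx D T Q
    (by
      intro z i
      rw [hD, hQ, hQ, hQ, Finset.mul_sum, Finset.mul_sum, Finset.mul_sum, ← Finset.sum_add_distrib,
        ← Finset.sum_add_distrib]
      refine Finset.sum_congr rfl fun j _ => ?_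
      unfold PhiM; ring) j0.1 (fun h => j0.2 ((memT' _).2 (Or.inl h)))
    (fun u => hPhm _ u) (fun p => by rw [hQs]; exact qm j0.1 j0.1 j0.2 _ _)
  -- cancellation
  let Ct := {t : Fin 4 // (t : ℕ) < 3 + e}
  have cCt : Fintype.card Ct = 3 + e := by
    have : e = 0 ∨ e = 1 := by omega
    rcases this with rfl | rfl <;> rfl
  have hjm : ∀ t, jC t ∈ Finset.Icc (-(l : ℤ)) l := by
    intro t; apply hmem; fin_cases t <;> simp [jC]
  have him : ∀ t, iC t ∈ Finset.Icc (-(l : ℤ)) l := by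
    intro t; apply hmem; fin_cases t <;> simp [iC]
  have hiT : ∀ t, (⟨iC t, him t⟩ : IZ l) ∈ T := by
    intro t; fin_cases t
    exacts [T0, T0, T2, T1]
  let c1 : Ct → J1 T := fun t => .inr (⟨⟨iC t.1, him t.1⟩, hiT t.1⟩, sC t.1)
  let c2 : Ct → J2 T := fun t => .inl ⟨jC t.1, hjm t.1⟩
  have jCinj : Function.Injective jC := by decide
  have ijinj : Function.Injective (fun t => (iC t, sC t)) := by decide
  have i2 : Function.Injective c2 := by
    intro a b h
    simp only [c2, Sum.inl.injEq, Subtype.mk.injEq] at h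
    exact Subtype.ext (jCinj h)
  have i1 : Function.Injective c1 := by
    intro a b h
    simp only [c1, Sum.inr.injEq, Prod.mk.injEq, Subtype.mk.injEq] at h
    exact Subtype.ext (ijinj (Prod.ext h.1 h.2))
  obtain ⟨Y, lam, hlam, Y1, Y2, Y3, Y11, Y12⟩ := cancel_exists X c1 c2 i2 (fun t => eC R t.1)
    (fun t => by
      rcases t with ⟨t, ht⟩
      fin_cases t <;> simp [eC])
    (by
      intro t t'
      rw [X2K]
      have s1 : (fun i => (Pi.single (c2 t) (1 : R) : J2 T → R) (.inl i)) = Pi.single ⟨jC t.1, hjm t.1⟩ 1 := by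
        ext i; simp [c2, Pi.single_apply]
      have s2 : (fun p => (Pi.single (c2 t) (1 : R) : J2 T → R) (.inr p)) = 0 := by
        ext i; simp [c2]
      rw [s1, s2, map_zero, hQs]
      simp only [Pi.zero_apply, add_zero]
      rw [qq_block]
      · exact if_congr Subtype.ext_iff.symm rfl rfl
      · intro h
        apply hδ1
        have := t.2
        rw [h] at this
        change 3 < 3 + e at this
        omega)
  have rc2 : ∀ j : IZ l, j ∈ T' → j ∉ T ∨ j = z0 ∨ j = z1 ∨ j = z2 → (.inl j : J2 T) ∈ Set.range c2 := by
    intro j hj h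
    rw [memT'] at hj
    have : j = z0 ∨ j = z1 ∨ j = z2 ∨ (e = 1 ∧ j = z3) := by tauto
    rcases this with rfl | rfl | rfl | ⟨h1, rfl⟩
    · exact ⟨⟨2, show 2 < 3 + e by omega⟩, rfl⟩
    · exact ⟨⟨1, show 1 < 3 + e by omega⟩, rfl⟩
    · exact ⟨⟨0, show 0 < 3 + e by omega⟩, rfl⟩
    · exact ⟨⟨3, show 3 < 3 + e by omega⟩, rfl⟩
  have qm2 : ∀ j : IZ l, (.inl j : J2 T) ∉ Set.range c2 → ∀ s (k : ℤ), qq x δ s k j.1 ∈ maximalIdeal R := by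
    intro j hj s k
    apply qq_mem hxI
    · intro h; exact hj ⟨⟨2, show 2 < 3 + e by omega⟩, congrArg Sum.inl (Subtype.ext h.symm)⟩
    · intro h; exact hj ⟨⟨0, show 0 < 3 + e by omega⟩, congrArg Sum.inl (Subtype.ext h.symm)⟩
    · intro h; exact hj ⟨⟨1, show 1 < 3 + e by omega⟩, congrArg Sum.inl (Subtype.ext h.symm)⟩
    · intro h
      apply hδ0
      by_contra h0
      exact hj ⟨⟨3, show 3 < 3 + e by omega⟩, congrArg Sum.inl (Subtype.ext h.symm)⟩
  have dB : ∀ z g, X.d2 (ext0 R (Set.range c2) z) g ∈ maximalIdeal R := by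
    rintro z (u | p)
    · rw [X2F]; exact hPhm _ _
    · rw [X2K, hQ]
      refine add_mem (sum_mem fun j _ => ?_) ?_
      · by_cases hj : (.inl j : J2 T) ∈ Set.range c2
        · rw [ext0_in _ _ _ hj, mul_zero]; exact zero_mem _
        · exact Ideal.mul_mem_right _ _ (qm2 j hj _ _)
      · have hm : ∀ s c, x s * c ∈ maximalIdeal R := fun s c => Ideal.mul_mem_right _ _ (hxI s)
        obtain ⟨i, s⟩ := p
        fin_cases s <;> exact sub_mem (hm _ _) (hm _ _)
  have dl : ∀ z g, X.d2 (lam z) g ∈ maximalIdeal R := by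
    intro z g
    rw [hlam, map_sub, map_sum, Pi.sub_apply, Finset.sum_apply]
    refine sub_mem (dB z g) (sum_mem fun t _ => ?_)
    rw [map_smul]
    exact Ideal.mul_mem_right _ _ (Ideal.mul_mem_left _ _ (dB z _))
  have lamI : ∀ z g, lam z g - ext0 R _ z g ∈ maximalIdeal R := by
    intro z g
    rw [hlam, Pi.sub_apply, sub_sub_cancel_left, Finset.sum_apply]
    refine neg_mem (sum_mem fun t _ => ?_)
    exact Ideal.mul_mem_right _ _ (Ideal.mul_mem_left _ _ (dB z _))
  have nT : ∀ i : {i // i ∉ T'}, i.1 ∉ T := fun i h => i.2 ((memT' _).2 (Or.inl h))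
  have nC : ∀ i : {i // i ∉ T'}, (.inl i.1 : J2 T) ∉ Set.range c2 := by
    rintro i ⟨⟨t, ht⟩, h⟩
    simp only [c2, Sum.inl.injEq] at h
    apply i.2
    rw [← h, memT']
    fin_cases t
    · exact Or.inl T2
    · exact Or.inl T1
    · exact Or.inl T0
    · refine Or.inr ⟨?_, rfl⟩
      simp at ht; omega
  refine assemble Y m n r ?_ ?_ (fun k => ⟨.inl ⟨(π k).1, nT _⟩, by rintro ⟨t, h⟩; simp [c1] at h⟩)
    (fun k => ⟨.inl (π k).1, nC _⟩) ?_ ?_ (.inl ()) ?_ ?_ ?_ ?_ ?_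
  · have h1 : Fintype.card {g : J1 T // g ∈ Set.range c1} = 3 + e := by
      exact (Fintype.card_congr (Equiv.ofInjective c1 i1)).symm.trans cCt
    rw [Fintype.card_subtype_compl, h1, Fintype.card_sum, Fintype.card_prod, Fintype.card_subtype_compl,
      cardI, Fintype.card_coe, hT3, Fintype.card_fin]
    omega
  · rw [Fintype.card_sum, Fintype.card_coe, hT3, Fintype.card_unit]; omega
  · intro a b h
    simp only [Subtype.mk.injEq, Sum.inl.injEq] at h
    exact π.injective (Subtype.ext h)
  · intro a b h
    simp only [Subtype.mk.injEq, Sum.inl.injEq] at h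
    exact π.injective (Subtype.ext h)
  · intro a; rw [Y1]; exact X1 _
  · intro a k
    have := dl a k.1
    rwa [Y2, ext0_out] at this
  · intro a k; rw [Y3]; exact X3 _ _
  · intro a b k; rw [Y11]; exact X11 _ _ _
  · rintro a b (⟨⟩ | i)
    · rw [Y12, Xs, ext0_single]
      have e1 : (alphaT x T (Pi.single a.1 1) ⬝ᵥ fun i => lam (Pi.single b 1) (Sum.inl i)) =
          (alphaT x T (Pi.single a.1 1) ⬝ᵥ fun i => (Pi.single b.1 1 : J2 T → R) (Sum.inl i)) +
          (alphaT x T (Pi.single a.1 1) ⬝ᵥ fun i => lam (Pi.single b 1) (Sum.inl i) -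
            (Pi.single b.1 1 : J2 T → R) (Sum.inl i)) := by
        rw [← dotProduct_add]; congr 1; ext i; simp
      rw [e1, add_sub_right_comm]
      refine add_mem ?_ (sum_mem fun i _ => Ideal.mul_mem_left _ _ ?_)
      · obtain ⟨(u | ⟨p, s⟩), ha⟩ := a
        · have e2 : alphaT x T (Pi.single (.inl u) 1) = Pi.single u.1 1 := by
            ext i
            simp only [alphaT, LinearMap.coe_mk, AddHom.coe_mk]
            by_cases h : i ∈ T
            · have : i ≠ u.1 := by rintro rfl; exact u.2 h
              simp [h, this]
            · rw [dif_neg h, Pi.single_apply, Pi.single_apply]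
              refine if_congr ⟨fun hh => ?_, fun hh => ?_⟩ rfl rfl
              · exact congrArg Subtype.val (Sum.inl.inj hh)
              · exact congrArg Sum.inl (Subtype.ext hh)
          rw [e2, single_dotProduct, one_mul, Pi.single_apply]
          have e3 : (.inl u.1 = b.1) ↔ ((∃ k : Fin r,
              (⟨.inl ⟨(π k).1, nT _⟩, by rintro ⟨t, h⟩; simp [c1] at h⟩ : {g : J1 T // g ∉ Set.range c1})
                = ⟨.inl u, ha⟩ ∧
              (⟨.inl (π k).1, nC _⟩ : {g : J2 T // g ∉ Set.range c2}) = b) ∧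
                (.inl () : J3 T) = .inl ()) := by
            constructor
            · intro h
              have hu : u.1 ∉ T' := by
                intro hu
                apply b.2
                rw [← h]
                exact rc2 u.1 hu (Or.inl u.2)
              refine ⟨⟨π.symm ⟨u.1, hu⟩, ?_, ?_⟩, rfl⟩
              · simp
              · apply Subtype.ext; simp [h]
            · rintro ⟨⟨k, hk, rfl⟩, -⟩
              simp only [Subtype.mk.injEq, Sum.inl.injEq] at hk
              rw [← hk]
          rw [if_congr e3 rfl rfl, sub_self]
          exact zero_mem _
        · rw [if_neg, sub_zero]
          · refine sum_mem fun i _ => Ideal.mul_mem_right _ _ ?_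
            simp only [alphaT, LinearMap.coe_mk, AddHom.coe_mk]
            split_ifs
            · exact add_mem (add_mem (Ideal.mul_mem_right _ _ (hxI _)) (Ideal.mul_mem_right _ _ (hxI _)))
                (Ideal.mul_mem_right _ _ (hxI _))
            · simp
          · rintro ⟨⟨k, hk, -⟩, -⟩
            simp at hk
      · have := lamI (Pi.single b 1) (.inl i)
        rwa [ext0_single] at this
    · rw [Y12]
      simp only [reduceCtorEq, and_false, if_false, sub_zero]
      exact Xu _ _ (dl _) i

end final

/-!
STATEMENT 16 (part of Corollary 5.8, case (3)): let `(R,𝔪,k)` be a regular local ring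
of dimension 3 and `(m,n,r)` positive integers with `r = m - 3(n-2) ≥ 2`, `n ≥ 4` and
`m ≥ 2n+1 ≥ 9`.  Then there is an ideal `J ⊆ R` with `pd_R(R/J) = 3` such that `R/J`
has Tor-algebra class `G(r)` and realizes the tuple `(m,n,r)`.
-/
theorem realizability_classG_case3
    {R : Type} [CommRing R] [IsNoetherianRing R] [IsLocalRing R]
    -- regular local of dimension 3
    (x : Fin 3 → R)
    (hreg : RingTheory.Sequence.IsRegular R [x 0, x 1, x 2])
    (hx : Ideal.span {x 0, x 1, x 2} = maximalIdeal R)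
    (m n r : ℕ)
    (harith : r + 3 * (n - 2) = m) (hr : 2 ≤ r) (hn : 4 ≤ n)
    (hm : 2 * n + 1 ≤ m) (hm9 : 9 ≤ 2 * n + 1) :
    ∃ J : Ideal R, HasTorClassGWithRanks R J m n r := by
  have kf := kfacts_of_regular x hreg
  rcases Nat.even_or_odd' (r + n) with ⟨c, hc | hc⟩
  · exact main_aux x kf hx m n r (c - 1) 0 harith hr hn (by omega) (by omega) (by omega)
  · exact main_aux x kf hx m n r c 1 harith hr hn (by omega) (by omega) (by omega)
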